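/- Let ρ^{ABCD} be a state of a quadripartite quantum system on finite-dimensional Hilbert spaces satisfying I(A;C|B) = 0, I(B;C|A) = 0 and I(A;B|CD) = 0. Then S(C|AB) + S(C|ABD) ≥ 0. -/

import Mathlib

/-!
The state `ρ` is purified by a system `E`. Since complementary marginals of a pure state have equal
entropy, the claim becomes `S(C|E) ≤ S(C|AB)` for the marginal `τ` on `ABCE`, under the hypotheses
`I(A;C|B) = I(B;C|A) = 0` and `I(A;B|E) = 0`.

*Equality in strong subadditivity.* The derivative in `s` of `tr ρ log (σ + s ρ)`, read with left
multiplication by `σ` and right multiplication by `ρ`, is the maximum of a quadratic functional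
`qform`. Restricting that functional to operators `1 ⊗ Y` yields the one for the reduced operators,
so integration over `s` gives monotonicity of the relative entropy (`MonoData.main`), hence strong
subadditivity (`ssa`). In case of equality the maximisers agree for all `s > 0`; the limits
`s → ∞` and `s → 0` yield `supp ρ_XY · supp ρ_YZ = supp ρ_XYZ` and `ρ_XY ρ_Y⁻¹ ρ_YZ = ρ_XYZ`
(`ssa_eq`).

*The common classical register.* From `I(A;C|B) = I(B;C|A) = 0` the blocks of `ρ_ABC` with respect
to `C` are both `ρ_AB (1 ⊗ x c c')` and `ρ_AB (x' c c' ⊗ 1)`. As operators on `A` commute with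
operators on `B`, a trace computation (`TwoSided.star_eq`) shows that the `x c c'` form a commuting
family that also commutes with `ρ_B` (`struct_ABC`). Its joint spectral projections are projective
measurements on `A` and on `B` that always give the same outcome `J`, and `J` carries all that `AB`
knows about `C`: `S(C|J) = S(C|B) = S(C|AB)` (`exists_sectors`).

*Reading the register from `E`.* Two measurements on `A` and on `B` that always agree, together with
`I(A;B|E) = 0`, force the states of `E` conditioned on distinct outcomes to be orthogonal
(`orth_E`), by the support identity above. Therefore `S(CE) = S(CJE)` and `S(E) = S(JE)`, and
strong subadditivity for `CJE` gives `S(C|E) = S(C|JE) ≤ S(C|J) = S(C|AB)` (`core`).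
-/


open scoped BigOperators ComplexOrder

/-- Von Neumann entropy (base 2) of a matrix: for a Hermitian matrix, the Shannon
entropy of its eigenvalues; junk value `0` for non-Hermitian matrices. -/
noncomputable def vNEntropy {n : Type*} [Fintype n] [DecidableEq n] (M : Matrix n n ℂ) : ℝ :=
  if h : M.IsHermitian then -∑ i, (h.eigenvalues i) * Real.logb 2 (h.eigenvalues i) else 0

/-- A density matrix: positive semidefinite with trace one. -/
def IsState {n : Type*} [Fintype n] [DecidableEq n] (M : Matrix n n ℂ) : Prop :=
  M.PosSemidef ∧ M.trace = 1

section Quad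

variable {A B C D : Type*} [Fintype A] [DecidableEq A] [Fintype B] [DecidableEq B]
  [Fintype C] [DecidableEq C] [Fintype D] [DecidableEq D]
  (ρ : Matrix (A × B × C × D) (A × B × C × D) ℂ)

/-- Entropies of the 15 marginals of a quadripartite state. -/
noncomputable def SA : ℝ :=
  vNEntropy (Matrix.of fun a a' : A => ∑ b, ∑ c, ∑ d, ρ (a, b, c, d) (a', b, c, d))
noncomputable def SB : ℝ :=
  vNEntropy (Matrix.of fun b b' : B => ∑ a, ∑ c, ∑ d, ρ (a, b, c, d) (a, b', c, d))
noncomputable def SC : ℝ :=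
  vNEntropy (Matrix.of fun c c' : C => ∑ a, ∑ b, ∑ d, ρ (a, b, c, d) (a, b, c', d))
noncomputable def SD : ℝ :=
  vNEntropy (Matrix.of fun d d' : D => ∑ a, ∑ b, ∑ c, ρ (a, b, c, d) (a, b, c, d'))
noncomputable def SAB : ℝ :=
  vNEntropy (Matrix.of fun p q : A × B => ∑ c, ∑ d, ρ (p.1, p.2, c, d) (q.1, q.2, c, d))
noncomputable def SAC : ℝ :=
  vNEntropy (Matrix.of fun p q : A × C => ∑ b, ∑ d, ρ (p.1, b, p.2, d) (q.1, b, q.2, d))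
noncomputable def SAD : ℝ :=
  vNEntropy (Matrix.of fun p q : A × D => ∑ b, ∑ c, ρ (p.1, b, c, p.2) (q.1, b, c, q.2))
noncomputable def SBC : ℝ :=
  vNEntropy (Matrix.of fun p q : B × C => ∑ a, ∑ d, ρ (a, p.1, p.2, d) (a, q.1, q.2, d))
noncomputable def SBD : ℝ :=
  vNEntropy (Matrix.of fun p q : B × D => ∑ a, ∑ c, ρ (a, p.1, c, p.2) (a, q.1, c, q.2))
noncomputable def SCD : ℝ :=
  vNEntropy (Matrix.of fun p q : C × D => ∑ a, ∑ b, ρ (a, b, p.1, p.2) (a, b, q.1, q.2))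
noncomputable def SABC : ℝ :=
  vNEntropy (Matrix.of fun p q : A × B × C =>
    ∑ d, ρ (p.1, p.2.1, p.2.2, d) (q.1, q.2.1, q.2.2, d))
noncomputable def SABD : ℝ :=
  vNEntropy (Matrix.of fun p q : A × B × D =>
    ∑ c, ρ (p.1, p.2.1, c, p.2.2) (q.1, q.2.1, c, q.2.2))
noncomputable def SACD : ℝ :=
  vNEntropy (Matrix.of fun p q : A × C × D =>
    ∑ b, ρ (p.1, b, p.2.1, p.2.2) (q.1, b, q.2.1, q.2.2))
noncomputable def SBCD : ℝ :=
  vNEntropy (Matrix.of fun p q : B × C × D =>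
    ∑ a, ρ (a, p.1, p.2.1, p.2.2) (a, q.1, q.2.1, q.2.2))
noncomputable def SABCD : ℝ := vNEntropy ρ

end Quad

/-! ### Entropy and functional calculus of Hermitian matrices -/

namespace QEnt
open Matrix Polynomial

variable {m n : Type*} [Fintype m] [DecidableEq m] [Fintype n] [DecidableEq n]

/-- The unitary `U` diagonalises `M` with real eigenvalues `d`. The eigenbasis is kept as explicit
data because ampliations `M ⊗ 1` come with an eigenbasis `U ⊗ 1` that need not be the one
Mathlib chooses. -/
structure IsDiagBy (M U : Matrix n n ℂ) (d : n → ℝ) : Prop where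
  left : Uᴴ * U = 1
  eq : M = U * diagonal (fun i => (d i : ℂ)) * Uᴴ

lemma IsDiagBy.right {M U : Matrix n n ℂ} {d : n → ℝ} (h : IsDiagBy M U d) : U * Uᴴ = 1 :=
  mul_eq_one_comm.mp h.left

lemma IsDiagBy.isHermitian {M U : Matrix n n ℂ} {d : n → ℝ} (h : IsDiagBy M U d) :
    M.IsHermitian := by
  have hd : (diagonal (fun i => (d i : ℂ)))ᴴ = diagonal (fun i => (d i : ℂ)) := by
    rw [diagonal_conjTranspose]; congr 1; ext i; simp
  rw [IsHermitian, h.eq, conjTranspose_mul, conjTranspose_mul, hd, conjTranspose_conjTranspose,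
    mul_assoc]

lemma isDiagBy_eigen {M : Matrix n n ℂ} (hM : M.IsHermitian) :
    IsDiagBy M (hM.eigenvectorUnitary : Matrix n n ℂ) hM.eigenvalues where
  left := by
    rw [← star_eq_conjTranspose]; exact Unitary.coe_star_mul_self _
  eq := by
    conv_lhs => rw [hM.spectral_theorem, Unitary.conjStarAlgAut_apply]
    rfl

lemma IsDiagBy.charpoly_roots {M U : Matrix n n ℂ} {d : n → ℝ} (h : IsDiagBy M U d) :
    M.charpoly.roots = Multiset.map (fun i => (d i : ℂ)) Finset.univ.val := by
  have : M.charpoly = (diagonal (fun i => (d i : ℂ))).charpoly := by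
    rw [h.eq, charpoly_mul_comm, ← mul_assoc, h.left, one_mul]
  rw [this, charpoly_diagonal, roots_prod_X_sub_C_eq]
where
  roots_prod_X_sub_C_eq : (∏ i, (X - C (d i : ℂ))).roots =
      Multiset.map (fun i => (d i : ℂ)) Finset.univ.val := by
    have := roots_multiset_prod_X_sub_C (Multiset.map (fun i => (d i : ℂ)) (Finset.univ : Finset n).val)
    rw [Multiset.map_map] at this
    exact this

/-- The entropy is a function of the multiset of roots of the characteristic polynomial. -/
lemma vNEntropy_eq_roots {M : Matrix n n ℂ} (hM : M.IsHermitian) :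
    vNEntropy M = (Multiset.map (fun z : ℂ => -(z.re * Real.logb 2 z.re)) M.charpoly.roots).sum := by
  rw [(isDiagBy_eigen hM).charpoly_roots, vNEntropy, dif_pos hM, Multiset.map_map,
    ← Finset.sum_neg_distrib]
  rfl

lemma IsDiagBy.vNEntropy_eq {M U : Matrix n n ℂ} {d : n → ℝ} (h : IsDiagBy M U d) :
    vNEntropy M * Real.log 2 = -∑ i, d i * Real.log (d i) := by
  rw [vNEntropy_eq_roots h.isHermitian, h.charpoly_roots, Multiset.map_map]
  have : ∀ i, -(d i * Real.logb 2 (d i)) * Real.log 2 = -(d i * Real.log (d i)) := by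
    intro i
    rw [Real.logb]
    have : Real.log 2 ≠ 0 := (Real.log_pos (by norm_num)).ne'
    field_simp
  have h2 : (Multiset.map ((fun z : ℂ => -(z.re * Real.logb 2 z.re)) ∘ fun i => (d i : ℂ))
      (Finset.univ : Finset n).val).sum = ∑ i, -(d i * Real.logb 2 (d i)) := by
    rfl
  rw [h2, Finset.sum_mul, ← Finset.sum_neg_distrib]
  exact Finset.sum_congr rfl fun i _ => this i

lemma vNEntropy_submatrix {M : Matrix n n ℂ} (hM : M.IsHermitian) (e : m ≃ n) :
    vNEntropy (M.submatrix e e) = vNEntropy M := by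
  have h2 : M.submatrix e e = reindex e.symm e.symm M := rfl
  rw [vNEntropy_eq_roots hM, vNEntropy_eq_roots (hM.submatrix e), h2, charpoly_reindex]

lemma vNEntropy_transpose {M : Matrix n n ℂ} (hM : M.IsHermitian) :
    vNEntropy Mᵀ = vNEntropy M := by
  rw [vNEntropy_eq_roots hM, vNEntropy_eq_roots hM.transpose, charpoly_transpose]

/-- The characteristic polynomials of `M Mᴴ` and `Mᴴ M` differ by a power of the variable, and
zero eigenvalues do not contribute to the entropy. -/
lemma vNEntropy_mul_conjTranspose (M : Matrix m n ℂ) :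
    vNEntropy (M * Mᴴ) = vNEntropy (Mᴴ * M) := by
  rw [vNEntropy_eq_roots (isHermitian_mul_conjTranspose_self M),
    vNEntropy_eq_roots (isHermitian_conjTranspose_mul_self M)]
  have h := congrArg roots (charpoly_mul_comm' M Mᴴ)
  have hm : (X ^ Fintype.card n * (M * Mᴴ).charpoly) ≠ 0 :=
    ((monic_X_pow _).mul (charpoly_monic _)).ne_zero
  have hn : (X ^ Fintype.card m * (Mᴴ * M).charpoly) ≠ 0 :=
    ((monic_X_pow _).mul (charpoly_monic _)).ne_zero
  rw [roots_mul hm, roots_mul hn, roots_X_pow, roots_X_pow] at h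
  have h3 := congrArg (fun s => (Multiset.map (fun z : ℂ => -(z.re * Real.logb 2 z.re)) s).sum) h
  simpa [Multiset.map_nsmul, Multiset.sum_nsmul] using h3

lemma exists_factor {ρ : Matrix n n ℂ} (hρ : ρ.PosSemidef) : ∃ B : Matrix n n ℂ, ρ = Bᴴ * B := by
  have h := isDiagBy_eigen hρ.1
  set U : Matrix n n ℂ := (hρ.1.eigenvectorUnitary : Matrix n n ℂ)
  refine ⟨diagonal (fun i => (Real.sqrt (hρ.1.eigenvalues i) : ℂ)) * Uᴴ, ?_⟩
  conv_lhs => rw [h.eq]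
  rw [conjTranspose_mul, conjTranspose_conjTranspose, diagonal_conjTranspose, mul_assoc, mul_assoc]
  congr 1
  rw [← mul_assoc, diagonal_mul_diagonal]
  congr 2
  ext i
  have := Real.mul_self_sqrt (hρ.eigenvalues_nonneg i)
  conv_lhs => rw [← this]
  simp

/-- If `tr (M ρ M*) = 0` with `ρ ≥ 0` then `M ρ = 0`. -/
lemma mul_eq_zero_of_trace {ρ : Matrix n n ℂ} (hρ : ρ.PosSemidef) (M : Matrix m n ℂ)
    (h : (M * ρ * Mᴴ).trace = 0) : M * ρ = 0 := by
  obtain ⟨B, rfl⟩ := exists_factor hρ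
  have : M * (Bᴴ * B) * Mᴴ = (M * Bᴴ) * (M * Bᴴ)ᴴ := by
    simp [conjTranspose_mul, Matrix.mul_assoc]
  rw [this, trace_mul_conjTranspose_self_eq_zero_iff] at h
  rw [← Matrix.mul_assoc, h, Matrix.zero_mul]

/-- Spectral function `f(M)`, in a fixed eigenbasis; `0` if `M` is not Hermitian. -/
noncomputable def spf (f : ℝ → ℝ) (M : Matrix n n ℂ) : Matrix n n ℂ :=
  if h : M.IsHermitian then
    (h.eigenvectorUnitary : Matrix n n ℂ) * diagonal (fun i => (f (h.eigenvalues i) : ℂ)) *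
      (h.eigenvectorUnitary : Matrix n n ℂ)ᴴ
  else 0

/-- The indicator of `x ≠ 0`. -/
noncomputable def ind (x : ℝ) : ℝ := if x = 0 then 0 else 1

/-- The projection onto the range of a Hermitian `M`. -/
noncomputable def supp (M : Matrix n n ℂ) : Matrix n n ℂ := spf ind M

/-- The pseudo-inverse of a Hermitian `M`; the convention `0⁻¹ = 0` makes it vanish on the kernel. -/
noncomputable def pinv (M : Matrix n n ℂ) : Matrix n n ℂ := spf (fun x => x⁻¹) M

lemma spf_isHermitian (f : ℝ → ℝ) (M : Matrix n n ℂ) : (spf f M).IsHermitian := by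
  unfold spf
  split_ifs with h
  · exact IsDiagBy.isHermitian (d := fun i => f (h.eigenvalues i)) ⟨(isDiagBy_eigen h).left, rfl⟩
  · exact isHermitian_zero

lemma supp_isHermitian (M : Matrix n n ℂ) : (supp M).IsHermitian := spf_isHermitian _ _
lemma pinv_isHermitian (M : Matrix n n ℂ) : (pinv M).IsHermitian := spf_isHermitian _ _

lemma spf_mul {M : Matrix n n ℂ} (f g : ℝ → ℝ) :
    spf f M * spf g M = spf (fun x => f x * g x) M := by
  unfold spf
  split_ifs with h
  · have hl := (isDiagBy_eigen h).left
    set U : Matrix n n ℂ := (h.eigenvectorUnitary : Matrix n n ℂ)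
    calc _ = U * diagonal (fun i => (f (h.eigenvalues i) : ℂ)) * (Uᴴ * U) *
          diagonal (fun i => (g (h.eigenvalues i) : ℂ)) * Uᴴ := by simp only [mul_assoc]
      _ = _ := by
        rw [hl, mul_one, mul_assoc U, diagonal_mul_diagonal]; simp
  · simp

lemma spf_id {M : Matrix n n ℂ} (h : M.IsHermitian) : spf (fun x => x) M = M := by
  unfold spf
  rw [dif_pos h]
  exact (isDiagBy_eigen h).eq.symm

lemma supp_mul_self {M : Matrix n n ℂ} (h : M.IsHermitian) : supp M * M = M := by
  have e : supp M * M = supp M * spf (fun x => x) M := by rw [spf_id h]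
  rw [e, supp, spf_mul]
  conv_rhs => rw [← spf_id h]
  congr 1; ext x; unfold ind; split_ifs with hx <;> simp [hx]

lemma self_mul_supp {M : Matrix n n ℂ} (h : M.IsHermitian) : M * supp M = M := by
  have := congrArg conjTranspose (supp_mul_self h)
  rwa [conjTranspose_mul, h.eq, (supp_isHermitian M).eq] at this

lemma pinv_mul_self {M : Matrix n n ℂ} (h : M.IsHermitian) : pinv M * M = supp M := by
  have e : pinv M * M = pinv M * spf (fun x => x) M := by rw [spf_id h]
  rw [e, pinv, spf_mul]
  unfold supp
  congr 1; ext x; unfold ind; split_ifs with hx <;> simp [hx]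

lemma self_mul_pinv {M : Matrix n n ℂ} (h : M.IsHermitian) : M * pinv M = supp M := by
  have := congrArg conjTranspose (pinv_mul_self h)
  rwa [conjTranspose_mul, h.eq, (supp_isHermitian M).eq, (pinv_isHermitian M).eq] at this

lemma supp_mul_supp (M : Matrix n n ℂ) : supp M * supp M = supp M := by
  unfold supp
  rw [spf_mul]
  congr 1; ext x; unfold ind; split_ifs with hx <;> simp

lemma supp_mul_pinv (M : Matrix n n ℂ) : supp M * pinv M = pinv M := by
  unfold supp pinv
  rw [spf_mul]
  congr 1; ext x; unfold ind; split_ifs with hx <;> simp [hx]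


lemma supp_posSemidef (M : Matrix n n ℂ) : (supp M).PosSemidef := by
  rw [← supp_mul_supp M]
  nth_rw 1 [← (supp_isHermitian M).eq]
  exact posSemidef_conjTranspose_mul_self _

end QEnt

/-! ### A comparison principle for logarithmic sums -/

namespace QEnt
open Filter Topology

section Analysis

variable {ι κ : Type*} [Fintype ι] [Fintype κ]

/-- The interpolating function `∑ w p log (q + s p)`. With `p`, `q` the eigenvalues of `ρ`, `σ` and
`w` the squared overlaps of their eigenvectors, its value at `s = 0` is `tr ρ log σ`, and its
behaviour as `s → ∞` is governed by `tr ρ log ρ`. -/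
noncomputable def logSum (w p q : ι → ℝ) (s : ℝ) : ℝ := ∑ i, w i * p i * Real.log (q i + s * p i)

/-- The derivative of `logSum` for positive `s`. -/
noncomputable def quotSum (w p q : ι → ℝ) (s : ℝ) : ℝ := ∑ i, w i * (p i ^ 2 / (q i + s * p i))

lemma logSum_hasDerivAt {w p q : ι → ℝ} (hp : ∀ i, 0 ≤ p i) (hq : ∀ i, 0 ≤ q i) {s : ℝ}
    (hs : 0 < s) : HasDerivAt (logSum w p q) (quotSum w p q s) s := by
  unfold logSum quotSum
  refine HasDerivAt.fun_sum fun i _ => ?_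
  rcases (hp i).eq_or_lt with h | h
  · simp only [← h]
    simpa using hasDerivAt_const s (0 : ℝ)
  · have hpos : 0 < q i + s * p i := add_pos_of_nonneg_of_pos (hq i) (mul_pos hs h)
    have h1 : HasDerivAt (fun s => q i + s * p i) (p i) s := by
      simpa using ((hasDerivAt_id s).mul_const (p i)).const_add (q i)
    have h2 := (h1.log hpos.ne').const_mul (w i * p i)
    exact h2.congr_deriv (by ring)

lemma logSum_tendsto_zero {w p q : ι → ℝ} (hsupp : ∀ i, q i = 0 → w i * p i = 0) :
    Tendsto (logSum w p q) (𝓝[>] 0) (𝓝 (∑ i, w i * p i * Real.log (q i))) := by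
  unfold logSum
  refine tendsto_finsetSum _ fun i _ => ?_
  by_cases h : q i = 0
  · simp [hsupp i h]
  · refine Tendsto.const_mul _ (Tendsto.log ?_ h)
    have : Tendsto (fun s : ℝ => q i + s * p i) (𝓝 0) (𝓝 (q i + 0 * p i)) :=
      (Continuous.tendsto (by fun_prop) 0)
    simpa using this.mono_left nhdsWithin_le_nhds

lemma logSum_tendsto_atTop {w p q : ι → ℝ} (hp : ∀ i, 0 ≤ p i) (hq : ∀ i, 0 ≤ q i) :
    Tendsto (fun s => logSum w p q s - (∑ i, w i * p i) * Real.log s) atTop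
      (𝓝 (∑ i, w i * p i * Real.log (p i))) := by
  have h0 : (fun s => logSum w p q s - (∑ i, w i * p i) * Real.log s) =
      fun s => ∑ i, w i * p i * (Real.log (q i + s * p i) - Real.log s) := by
    ext s
    simp only [logSum, Finset.sum_mul, mul_sub, Finset.sum_sub_distrib]
  rw [h0]
  refine tendsto_finsetSum _ fun i _ => ?_
  rcases (hp i).eq_or_lt with h | h
  · simp [← h]
  · refine Tendsto.const_mul _ ?_
    have h1 : Tendsto (fun s : ℝ => Real.log (q i * s⁻¹ + p i)) atTop
        (𝓝 (Real.log (p i))) := by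
      refine Tendsto.log ?_ h.ne'
      simpa using (tendsto_inv_atTop_zero.const_mul (q i)).add_const (p i)
    refine h1.congr' ?_
    filter_upwards [eventually_gt_atTop 0] with s hs
    have hpos : 0 < q i + s * p i := add_pos_of_nonneg_of_pos (hq i) (mul_pos hs h)
    rw [← Real.log_div hpos.ne' hs.ne']
    congr 1
    field_simp

/-- Comparison of two families: an inequality between the derivatives for all `s > 0` integrates
to an inequality between the boundary values, with equality only if the derivatives agree. -/
theorem logSum_compare {w p q : ι → ℝ} {w' p' q' : κ → ℝ}
    (hp : ∀ i, 0 ≤ p i) (hq : ∀ i, 0 ≤ q i) (hp' : ∀ i, 0 ≤ p' i) (hq' : ∀ i, 0 ≤ q' i)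
    (hsupp : ∀ i, q i = 0 → w i * p i = 0) (hsupp' : ∀ i, q' i = 0 → w' i * p' i = 0)
    (hsum : ∑ i, w i * p i = ∑ i, w' i * p' i)
    (hF : ∀ s, 0 < s → quotSum w' p' q' s ≤ quotSum w p q s) :
    (∑ i, w i * p i * Real.log (q i) - ∑ i, w' i * p' i * Real.log (q' i) ≤
      ∑ i, w i * p i * Real.log (p i) - ∑ i, w' i * p' i * Real.log (p' i)) ∧
    (∑ i, w i * p i * Real.log (q i) - ∑ i, w' i * p' i * Real.log (q' i) =
      ∑ i, w i * p i * Real.log (p i) - ∑ i, w' i * p' i * Real.log (p' i) →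
      ∀ s, 0 < s → quotSum w' p' q' s = quotSum w p q s) := by
  set H : ℝ → ℝ := fun s => logSum w p q s - logSum w' p' q' s
  have hd : ∀ s, 0 < s → HasDerivAt H (quotSum w p q s - quotSum w' p' q' s) s := fun s hs =>
    (logSum_hasDerivAt hp hq hs).sub (logSum_hasDerivAt hp' hq' hs)
  have h0 : Tendsto H (𝓝[>] 0) (𝓝 (∑ i, w i * p i * Real.log (q i) -
      ∑ i, w' i * p' i * Real.log (q' i))) :=
    (logSum_tendsto_zero hsupp).sub (logSum_tendsto_zero hsupp')
  have h1 : Tendsto H atTop (𝓝 (∑ i, w i * p i * Real.log (p i) -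
      ∑ i, w' i * p' i * Real.log (p' i))) := by
    refine ((logSum_tendsto_atTop (w := w) hp hq).sub
      (logSum_tendsto_atTop (w := w') hp' hq')).congr fun s => ?_
    simp only [H, hsum]; ring
  have hmono : MonotoneOn H (Set.Ioi 0) := by
    refine monotoneOn_of_deriv_nonneg (convex_Ioi 0)
      (fun s hs => (hd s hs).continuousAt.continuousWithinAt)
      (fun s hs => ?_) (fun s hs => ?_)
    · rw [interior_Ioi] at hs ⊢
      exact (hd s hs).differentiableAt.differentiableWithinAt
    · rw [interior_Ioi] at hs
      rw [(hd s hs).deriv]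
      exact sub_nonneg.mpr (hF s hs)
  have hlow : ∀ s, 0 < s → ∑ i, w i * p i * Real.log (q i) -
      ∑ i, w' i * p' i * Real.log (q' i) ≤ H s := by
    intro s hs
    refine le_of_tendsto h0 ?_
    filter_upwards [Ioo_mem_nhdsGT hs] with t ht
    exact hmono ht.1 hs ht.2.le
  have hup : ∀ s, 0 < s → H s ≤ ∑ i, w i * p i * Real.log (p i) -
      ∑ i, w' i * p' i * Real.log (p' i) := by
    intro s hs
    refine ge_of_tendsto h1 ?_
    filter_upwards [eventually_ge_atTop s] with t ht
    exact hmono hs (lt_of_lt_of_le hs ht) ht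
  refine ⟨(hlow 1 one_pos).trans (hup 1 one_pos), fun heq s hs => ?_⟩
  have hc : H =ᶠ[𝓝 s] fun _ => ∑ i, w i * p i * Real.log (q i) -
      ∑ i, w' i * p' i * Real.log (q' i) := by
    filter_upwards [Ioi_mem_nhds hs] with t ht
    exact le_antisymm ((hup t ht).trans heq.ge) (hlow t ht)
  have := (hd s hs).unique ((hasDerivAt_const s _).congr_of_eventuallyEq hc)
  linarith

end Analysis

end QEnt

/-! ### A variational formula -/

namespace QEnt
open Matrix Filter Topology
open scoped Kronecker

section Variational
set_option linter.unusedSectionVars false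

variable {n X N : Type*} [Fintype n] [DecidableEq n] [Fintype X] [DecidableEq X]
  [Fintype N] [DecidableEq N]

lemma trace_mul_eq_sum (M M' : Matrix n n ℂ) : (M * M').trace = ∑ i, ∑ j, M i j * M' j i := by
  simp only [trace, diag, Matrix.mul_apply]

/-- Partial trace over the first factor. -/
def ptr (M : Matrix (X × N) (X × N) ℂ) : Matrix N N ℂ := of fun a b => ∑ x, M (x, a) (x, b)

lemma trace_kron_mul (Y : Matrix N N ℂ) (M : Matrix (X × N) (X × N) ℂ) :
    (((1 : Matrix X X ℂ) ⊗ₖ Y) * M).trace = (Y * ptr M).trace := by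
  simp only [trace, diag, mul_apply, Fintype.sum_prod_type, kroneckerMap_apply, ptr, of_apply,
    one_apply, ite_mul, one_mul, zero_mul, Finset.mul_sum]
  rw [Finset.sum_comm]
  refine Finset.sum_congr rfl fun b _ => ?_
  simp only [Finset.sum_ite_irrel, Finset.sum_const_zero, Finset.sum_ite_eq, Finset.mem_univ,
    if_true]
  exact Finset.sum_comm

/-- The quadratic functional whose maximum over `X` is `quotSum` (see `qform_eq`). -/
noncomputable def qform (ρ σ : Matrix n n ℂ) (s : ℝ) (X : Matrix n n ℂ) : ℝ :=
  2 * (Xᴴ * ρ).trace.re - (Xᴴ * σ * X).trace.re - s * (X * ρ * Xᴴ).trace.re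

/-- Restricting `qform` to operators `1 ⊗ Y` gives the `qform` of the reduced operators. This is
the source of monotonicity under partial trace. -/
lemma qform_kron (ρ σ : Matrix (X × N) (X × N) ℂ) (s : ℝ) (Y : Matrix N N ℂ) :
    qform ρ σ s ((1 : Matrix X X ℂ) ⊗ₖ Y) = qform (ptr ρ) (ptr σ) s Y := by
  have h1 : (((1 : Matrix X X ℂ) ⊗ₖ Y)ᴴ) = (1 : Matrix X X ℂ) ⊗ₖ Yᴴ := by
    rw [conjTranspose_kronecker, conjTranspose_one]
  unfold qform
  rw [trace_mul_comm _ ((1 : Matrix X X ℂ) ⊗ₖ Y), trace_mul_comm _ (((1 : Matrix X X ℂ) ⊗ₖ Y)ᴴ),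
    h1, ← mul_assoc, ← mul_assoc, ← mul_kronecker_mul, ← mul_kronecker_mul, one_mul,
    trace_kron_mul, trace_kron_mul, trace_kron_mul, trace_mul_comm _ Y, trace_mul_comm _ Yᴴ,
    ← mul_assoc, ← mul_assoc]

lemma qform_coord {ρ σ U V : Matrix n n ℂ} {p q : n → ℝ} (hρ : IsDiagBy ρ U p)
    (hσ : IsDiagBy σ V q) (s : ℝ) (X : Matrix n n ℂ) :
    qform ρ σ s X = ∑ ji : n × n, (2 * (star ((Vᴴ * X * U) ji.1 ji.2) * (Vᴴ * U) ji.1 ji.2).re *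
      p ji.2 - (q ji.1 + s * p ji.2) * ‖(Vᴴ * X * U) ji.1 ji.2‖ ^ 2) := by
  set Z := Vᴴ * X * U with hZ
  have hX : X = V * Z * Uᴴ := by
    calc X = (V * Vᴴ) * X * (U * Uᴴ) := by rw [hρ.right, hσ.right]; simp
      _ = _ := by rw [hZ]; simp only [mul_assoc]
  have hXH : Xᴴ = U * Zᴴ * Vᴴ := by
    rw [hX]; simp only [conjTranspose_mul, conjTranspose_conjTranspose, mul_assoc]
  have e1 : (Xᴴ * ρ).trace = ∑ j, ∑ i, star (Z j i) * (Vᴴ * U) j i * p i := by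
    have : (Xᴴ * ρ).trace = (Zᴴ * (Vᴴ * U * diagonal (fun i => (p i : ℂ)))).trace := by
      rw [hXH, hρ.eq]
      rw [show U * Zᴴ * Vᴴ * (U * diagonal (fun i => (p i : ℂ)) * Uᴴ) =
        U * (Zᴴ * (Vᴴ * U * diagonal (fun i => (p i : ℂ))) * Uᴴ) by simp only [mul_assoc],
        trace_mul_comm, mul_assoc, hρ.left, mul_one]
    rw [this, trace_mul_eq_sum, Finset.sum_comm]
    simp only [mul_diagonal, conjTranspose_apply]
    refine Finset.sum_congr rfl fun j _ => Finset.sum_congr rfl fun i _ => ?_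
    ring
  have nsq : ∀ z : ℂ, star z * z = ((‖z‖ ^ 2 : ℝ) : ℂ) := by
    intro z
    rw [Complex.star_def, Complex.conj_mul']; simp
  have e2 : (Xᴴ * σ * X).trace = ∑ j, ∑ i, ((q j * ‖Z j i‖ ^ 2 : ℝ) : ℂ) := by
    have : (Xᴴ * σ * X).trace = (Zᴴ * (diagonal (fun i => (q i : ℂ)) * Z)).trace := by
      rw [hXH, hσ.eq, hX]
      rw [show U * Zᴴ * Vᴴ * (V * diagonal (fun i => (q i : ℂ)) * Vᴴ) * (V * Z * Uᴴ) =
        U * (Zᴴ * ((Vᴴ * V) * diagonal (fun i => (q i : ℂ)) * (Vᴴ * V) * Z) * Uᴴ) by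
          simp only [mul_assoc],
        trace_mul_comm, mul_assoc, hρ.left, hσ.left, mul_one, one_mul, mul_one]
    rw [this, trace_mul_eq_sum, Finset.sum_comm]
    simp only [diagonal_mul, conjTranspose_apply]
    refine Finset.sum_congr rfl fun j _ => Finset.sum_congr rfl fun i _ => ?_
    rw [Complex.ofReal_mul, ← nsq]; ring
  have e3 : (X * ρ * Xᴴ).trace = ∑ j, ∑ i, ((p i * ‖Z j i‖ ^ 2 : ℝ) : ℂ) := by
    have : (X * ρ * Xᴴ).trace = (Z * diagonal (fun i => (p i : ℂ)) * Zᴴ).trace := by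
      rw [hXH, hρ.eq, hX]
      rw [show V * Z * Uᴴ * (U * diagonal (fun i => (p i : ℂ)) * Uᴴ) * (U * Zᴴ * Vᴴ) =
        V * (Z * ((Uᴴ * U) * diagonal (fun i => (p i : ℂ)) * (Uᴴ * U)) * Zᴴ * Vᴴ) by
          simp only [mul_assoc],
        trace_mul_comm, mul_assoc, hρ.left, hσ.left, mul_one, one_mul, mul_one]
    rw [this, trace_mul_eq_sum]
    simp only [mul_diagonal, conjTranspose_apply]
    refine Finset.sum_congr rfl fun j _ => ?_
    refine Finset.sum_congr rfl fun i _ => ?_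
    rw [Complex.ofReal_mul, ← nsq]; ring
  unfold qform
  rw [e1, e2, e3, Fintype.sum_prod_type]
  simp only [Complex.re_sum, Complex.ofReal_re, Finset.mul_sum, ← Finset.sum_sub_distrib]
  refine Finset.sum_congr rfl fun j _ => Finset.sum_congr rfl fun i _ => ?_
  rw [Complex.re_mul_ofReal]
  ring

/-- The maximiser of `qform` in eigenbasis coordinates, with `W` the overlap matrix of the two
eigenbases. -/
noncomputable def optim (W : Matrix n n ℂ) (p q : n → ℝ) (s : ℝ) : Matrix n n ℂ :=
  of fun j i => W j i * ((p i / (q j + s * p i) : ℝ) : ℂ)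

/-- Completing the square. -/
lemma qform_eq {ρ σ U V : Matrix n n ℂ} {p q : n → ℝ} (hρ : IsDiagBy ρ U p)
    (hσ : IsDiagBy σ V q) (hp : ∀ i, 0 ≤ p i) (hq : ∀ i, 0 ≤ q i) {s : ℝ} (hs : 0 < s)
    (X : Matrix n n ℂ) :
    qform ρ σ s X = quotSum (fun ji : n × n => ‖(Vᴴ * U) ji.1 ji.2‖ ^ 2) (fun ji => p ji.2)
        (fun ji => q ji.1) s -
      ∑ ji : n × n, (q ji.1 + s * p ji.2) *
        ‖(Vᴴ * X * U) ji.1 ji.2 - optim (Vᴴ * U) p q s ji.1 ji.2‖ ^ 2 := by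
  rw [qform_coord hρ hσ, quotSum, ← Finset.sum_sub_distrib]
  refine Finset.sum_congr rfl fun ji _ => ?_
  simp only [optim, of_apply]
  generalize (Vᴴ * X * U) ji.1 ji.2 = z
  generalize (Vᴴ * U) ji.1 ji.2 = w
  have hp := hp ji.2
  have hq := hq ji.1
  generalize p ji.2 = a at *
  generalize q ji.1 = b at *
  by_cases hr : b + s * a = 0
  · have ha : a = 0 := by nlinarith [mul_nonneg hs.le hp]
    simp [ha]
  · simp only [← Complex.normSq_eq_norm_sq, Complex.normSq_apply]
    simp only [Complex.star_def, Complex.mul_re, Complex.conj_re, Complex.conj_im, Complex.sub_re,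
      Complex.sub_im, Complex.mul_im, Complex.ofReal_re, Complex.ofReal_im]
    obtain ⟨r, hr'⟩ : ∃ r, r = b + s * a := ⟨_, rfl⟩
    obtain ⟨t, ht⟩ : ∃ t, t = a / r := ⟨_, rfl⟩
    rw [← hr'] at hr ⊢
    have ha : a = t * r := by rw [ht]; field_simp
    have h2 : a ^ 2 / r = t ^ 2 * r := by rw [ht]; field_simp
    rw [h2, ← ht, ha]
    ring

lemma optim_tendsto_zero (W : Matrix n n ℂ) (p q : n → ℝ)
    (h : ∀ j i, q j = 0 → W j i * p i = 0) :
    Tendsto (optim W p q) (𝓝[>] 0)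
      (𝓝 (diagonal (fun j => ((q j)⁻¹ : ℂ)) * W * diagonal (fun i => (p i : ℂ)))) := by
  refine tendsto_pi_nhds.mpr fun j => tendsto_pi_nhds.mpr fun i => ?_
  rw [mul_diagonal, diagonal_mul]
  simp only [optim, of_apply]
  by_cases hq : q j = 0
  · have := h j i hq
    have h2 : ∀ s : ℝ, W j i * ((p i / (q j + s * p i) : ℝ) : ℂ) = 0 := by
      intro s
      push_cast
      rw [mul_div_assoc', this, zero_div]
    refine (tendsto_congr h2).mpr ?_
    simp [hq]
  · have h1 : Tendsto (fun s : ℝ => p i / (q j + s * p i)) (𝓝 0) (𝓝 (p i / (q j + 0 * p i))) := by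
      refine Tendsto.div tendsto_const_nhds (Continuous.tendsto (by fun_prop) 0) (by simpa using hq)
    have h2 := ((Complex.continuous_ofReal.tendsto _).comp
      (h1.mono_left (nhdsWithin_le_nhds (s := Set.Ioi 0)))).const_mul (W j i)
    have e : W j i * ((p i / (q j + 0 * p i) : ℝ) : ℂ) = (q j : ℂ)⁻¹ * W j i * (p i : ℂ) := by
      push_cast
      rw [zero_mul, add_zero]
      ring
    rw [← e]
    exact h2

lemma optim_tendsto_atTop (W : Matrix n n ℂ) {p q : n → ℝ} :
    Tendsto (fun s : ℝ => (s : ℂ) • optim W p q s) atTop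
      (𝓝 (W * diagonal (fun i => (ind (p i) : ℂ)))) := by
  refine tendsto_pi_nhds.mpr fun j => tendsto_pi_nhds.mpr fun i => ?_
  rw [mul_diagonal]
  change Tendsto (fun s : ℝ => (s : ℂ) * (W j i * ((p i / (q j + s * p i) : ℝ) : ℂ))) _ _
  by_cases hp : p i = 0
  · simp [hp, ind]
  · have h1 : Tendsto (fun s : ℝ => p i / (q j * s⁻¹ + p i)) atTop (𝓝 (p i / (q j * 0 + p i))) := by
      refine Tendsto.div tendsto_const_nhds
        ((tendsto_inv_atTop_zero.const_mul (q j)).add_const (p i)) (by simpa using hp)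
    have h2 := ((Complex.continuous_ofReal.tendsto _).comp h1).const_mul (W j i)
    have e : ((p i / (q j * 0 + p i) : ℝ) : ℂ) = (ind (p i) : ℂ) := by
      rw [ind, if_neg hp, mul_zero, zero_add, div_self hp]
    rw [e] at h2
    refine h2.congr' ?_
    filter_upwards [eventually_gt_atTop 0] with s hs
    have : p i / (q j * s⁻¹ + p i) = s * (p i / (q j + s * p i)) := by
      have : q j * s⁻¹ + p i = (q j + s * p i) / s := by field_simp
      rw [this, div_div_eq_mul_div]; ring
    simp only [Function.comp, this]
    push_cast
    ring

end Variational
end QEnt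

/-! ### Monotonicity of the relative entropy under partial trace -/

namespace QEnt
open Matrix Filter Topology
open scoped Kronecker

section Mono
set_option linter.unusedSectionVars false

variable {n X N : Type*} [Fintype n] [DecidableEq n] [Fintype X] [DecidableEq X]
  [Fintype N] [DecidableEq N]

/-- `tr ρ log σ`, where `V` and `q` are eigenvectors and eigenvalues of `σ`. -/
noncomputable def cross (ρ V : Matrix n n ℂ) (q : n → ℝ) : ℝ :=
  ∑ j, ((Vᴴ * ρ * V) j j).re * Real.log (q j)

lemma diag_conj_eq {ρ U V : Matrix n n ℂ} {p : n → ℝ} (hρ : IsDiagBy ρ U p) (j : n) :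
    (Vᴴ * ρ * V) j j = ((∑ i, ‖(Vᴴ * U) j i‖ ^ 2 * p i : ℝ) : ℂ) := by
  have : Vᴴ * ρ * V = (Vᴴ * U) * diagonal (fun i => (p i : ℂ)) * (Vᴴ * U)ᴴ := by
    rw [hρ.eq]; simp only [conjTranspose_mul, conjTranspose_conjTranspose, mul_assoc]
  rw [this, Matrix.mul_apply]
  push_cast
  refine Finset.sum_congr rfl fun i _ => ?_
  rw [mul_diagonal, conjTranspose_apply]
  have h := Complex.conj_mul' ((Vᴴ * U) j i)
  rw [← h, Complex.star_def]; ring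

lemma supp_cond {ρ U V : Matrix n n ℂ} {p q : n → ℝ} (hρ : IsDiagBy ρ U p)
    (hp : ∀ i, 0 ≤ p i) (h : ∀ j, q j = 0 → (Vᴴ * ρ * V) j j = 0) (j i : n) (hq : q j = 0) :
    (Vᴴ * U) j i * p i = 0 := by
  have h1 := h j hq
  rw [diag_conj_eq hρ, Complex.ofReal_eq_zero, Finset.sum_eq_zero_iff_of_nonneg
    (fun i _ => mul_nonneg (sq_nonneg _) (hp i))] at h1
  have := h1 i (Finset.mem_univ i)
  rcases mul_eq_zero.mp this with h | h
  · rw [norm_eq_zero.mp (pow_eq_zero_iff (two_ne_zero) |>.mp h), zero_mul]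
  · rw [h]; simp

lemma sum_col_norm {U V : Matrix n n ℂ} (hU : Uᴴ * U = 1) (hV : V * Vᴴ = 1) (i : n) :
    ∑ j, ‖(Vᴴ * U) j i‖ ^ 2 = 1 := by
  have h : (Vᴴ * U)ᴴ * (Vᴴ * U) = 1 := by
    rw [conjTranspose_mul, conjTranspose_conjTranspose, mul_assoc, ← mul_assoc V, hV, one_mul, hU]
  have h2 := congrFun (congrFun h i) i
  rw [Matrix.mul_apply, one_apply_eq] at h2
  have h3 : ((∑ j, ‖(Vᴴ * U) j i‖ ^ 2 : ℝ) : ℂ) = 1 := by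
    rw [← h2]
    push_cast
    refine Finset.sum_congr rfl fun j _ => ?_
    rw [conjTranspose_apply, Complex.star_def, Complex.conj_mul']
  exact_mod_cast h3

lemma sum_weights {U V : Matrix n n ℂ} (hU : Uᴴ * U = 1) (hV : V * Vᴴ = 1) (f : n → ℝ) :
    ∑ ji : n × n, ‖(Vᴴ * U) ji.1 ji.2‖ ^ 2 * f ji.2 = ∑ i, f i := by
  rw [Fintype.sum_prod_type, Finset.sum_comm]
  refine Finset.sum_congr rfl fun i _ => ?_
  change ∑ j, ‖(Vᴴ * U) j i‖ ^ 2 * f i = f i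
  rw [← Finset.sum_mul, sum_col_norm hU hV, one_mul]

lemma cross_eq {ρ U V : Matrix n n ℂ} {p : n → ℝ} (hρ : IsDiagBy ρ U p) (q : n → ℝ) :
    cross ρ V q = ∑ ji : n × n, ‖(Vᴴ * U) ji.1 ji.2‖ ^ 2 * p ji.2 * Real.log (q ji.1) := by
  rw [cross, Fintype.sum_prod_type]
  refine Finset.sum_congr rfl fun j _ => ?_
  rw [diag_conj_eq hρ, Complex.ofReal_re, Finset.sum_mul]

lemma IsDiagBy.trace_eq {M U : Matrix n n ℂ} {d : n → ℝ} (h : IsDiagBy M U d) :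
    M.trace = ((∑ i, d i : ℝ) : ℂ) := by
  rw [h.eq, trace_mul_comm, ← mul_assoc, h.left, one_mul, trace_diagonal]
  push_cast; rfl

lemma trace_ptr (M : Matrix (X × N) (X × N) ℂ) : (ptr M).trace = M.trace := by
  have := trace_kron_mul (X := X) (1 : Matrix N N ℂ) M
  rw [one_kronecker_one, one_mul, one_mul] at this
  exact this.symm

variable {ρ σ U V : Matrix (X × N) (X × N) ℂ} {p q : X × N → ℝ}
  {U' V' : Matrix N N ℂ} {p' q' : N → ℝ}

/-- Spectral decompositions of positive `ρ`, `σ` and of their partial traces, such that the support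
of `ρ` is contained in that of `σ`, and likewise for the partial traces. -/
structure MonoData (ρ σ U V : Matrix (X × N) (X × N) ℂ) (p q : X × N → ℝ)
    (U' V' : Matrix N N ℂ) (p' q' : N → ℝ) : Prop where
  dρ : IsDiagBy ρ U p
  dσ : IsDiagBy σ V q
  dρ' : IsDiagBy (ptr ρ) U' p'
  dσ' : IsDiagBy (ptr σ) V' q'
  hp : ∀ i, 0 ≤ p i
  hq : ∀ i, 0 ≤ q i
  hp' : ∀ i, 0 ≤ p' i
  hq' : ∀ i, 0 ≤ q' i
  hs : ∀ j, q j = 0 → (Vᴴ * ρ * V) j j = 0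
  hs' : ∀ j, q' j = 0 → (V'ᴴ * ptr ρ * V') j j = 0

/-- The maximiser of `qform` for the partial traces, in the standard basis. -/
noncomputable def optY (U' V' : Matrix N N ℂ) (p' q' : N → ℝ) (s : ℝ) : Matrix N N ℂ :=
  V' * optim (V'ᴴ * U') p' q' s * U'ᴴ

lemma MonoData.quot_eq (D : MonoData ρ σ U V p q U' V' p' q') {s : ℝ} (hs : 0 < s) :
    quotSum (fun ji : N × N => ‖(V'ᴴ * U') ji.1 ji.2‖ ^ 2) (fun ji => p' ji.2)
        (fun ji => q' ji.1) s =
    quotSum (fun ji : (X × N) × (X × N) => ‖(Vᴴ * U) ji.1 ji.2‖ ^ 2) (fun ji => p ji.2)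
        (fun ji => q ji.1) s -
      ∑ ji : (X × N) × (X × N), (q ji.1 + s * p ji.2) *
        ‖(Vᴴ * ((1 : Matrix X X ℂ) ⊗ₖ optY U' V' p' q' s) * U) ji.1 ji.2 -
          optim (Vᴴ * U) p q s ji.1 ji.2‖ ^ 2 := by
  rw [← qform_eq D.dρ D.dσ D.hp D.hq hs, qform_kron, qform_eq D.dρ' D.dσ' D.hp' D.hq' hs]
  have : V'ᴴ * optY U' V' p' q' s * U' = optim (V'ᴴ * U') p' q' s := by
    unfold optY
    rw [← mul_assoc, ← mul_assoc, D.dσ'.left, one_mul, mul_assoc, D.dρ'.left, mul_one]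
  rw [this]
  simp

/-- Monotonicity of the relative entropy under partial trace. In case of equality the lifted
reduced maximiser `1 ⊗ Y` is, for every `s > 0`, a maximiser of the full problem. -/
lemma MonoData.main (D : MonoData ρ σ U V p q U' V' p' q') :
    (cross ρ V q - cross (ptr ρ) V' q' ≤
      ∑ i, p i * Real.log (p i) - ∑ i, p' i * Real.log (p' i)) ∧
    (cross ρ V q - cross (ptr ρ) V' q' =
      ∑ i, p i * Real.log (p i) - ∑ i, p' i * Real.log (p' i) →
      ∀ s, 0 < s → ∀ j i, q j + s * p i ≠ 0 →
        (Vᴴ * ((1 : Matrix X X ℂ) ⊗ₖ optY U' V' p' q' s) * U) j i = optim (Vᴴ * U) p q s j i) := by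
  have hnn : ∀ s, 0 < s → ∀ ji : (X × N) × (X × N), 0 ≤ (q ji.1 + s * p ji.2) *
        ‖(Vᴴ * ((1 : Matrix X X ℂ) ⊗ₖ optY U' V' p' q' s) * U) ji.1 ji.2 -
          optim (Vᴴ * U) p q s ji.1 ji.2‖ ^ 2 := fun s hs ji =>
    mul_nonneg (add_nonneg (D.hq _) (mul_nonneg hs.le (D.hp _))) (sq_nonneg _)
  have hw : ∀ {w : ℂ} {a : ℝ}, w * a = 0 → ‖w‖ ^ 2 * a = 0 := by
    intro w a h
    rcases mul_eq_zero.mp h with h | h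
    · simp [h]
    · rw [Complex.ofReal_eq_zero.mp h, mul_zero]
  have key := logSum_compare
    (w := fun ji : (X × N) × (X × N) => ‖(Vᴴ * U) ji.1 ji.2‖ ^ 2) (p := fun ji => p ji.2)
    (q := fun ji => q ji.1)
    (w' := fun ji : N × N => ‖(V'ᴴ * U') ji.1 ji.2‖ ^ 2) (p' := fun ji => p' ji.2)
    (q' := fun ji => q' ji.1) (fun _ => D.hp _) (fun _ => D.hq _) (fun _ => D.hp' _)
    (fun _ => D.hq' _) (fun ji h => hw (supp_cond D.dρ D.hp D.hs ji.1 ji.2 h))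
    (fun ji h => hw (supp_cond D.dρ' D.hp' D.hs' ji.1 ji.2 h))
    (by
      rw [sum_weights D.dρ.left D.dσ.right p, sum_weights D.dρ'.left D.dσ'.right p']
      have := trace_ptr ρ
      rw [D.dρ.trace_eq, D.dρ'.trace_eq] at this
      exact_mod_cast this.symm)
    (fun s hs => by
      rw [D.quot_eq hs]
      exact sub_le_self _ (Finset.sum_nonneg fun ji _ => hnn s hs ji))
  have e1 : ∑ ji : (X × N) × (X × N), ‖(Vᴴ * U) ji.1 ji.2‖ ^ 2 * p ji.2 * Real.log (p ji.2) =
      ∑ i, p i * Real.log (p i) := by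
    simp only [mul_assoc]
    exact sum_weights D.dρ.left D.dσ.right fun i => p i * Real.log (p i)
  have e2 : ∑ ji : N × N, ‖(V'ᴴ * U') ji.1 ji.2‖ ^ 2 * p' ji.2 * Real.log (p' ji.2) =
      ∑ i, p' i * Real.log (p' i) := by
    simp only [mul_assoc]
    exact sum_weights D.dρ'.left D.dσ'.right fun i => p' i * Real.log (p' i)
  rw [← cross_eq D.dρ q, ← cross_eq D.dρ' q', e1, e2] at key
  refine ⟨key.1, fun heq s hs j i hr => ?_⟩
  have h1 := key.2 heq s hs
  rw [D.quot_eq hs] at h1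
  have h2 := sub_eq_self.mp h1
  rw [Finset.sum_eq_zero_iff_of_nonneg fun ji _ => hnn s hs ji] at h2
  have h3 := h2 (j, i) (Finset.mem_univ _)
  rcases mul_eq_zero.mp h3 with h | h
  · exact absurd h hr
  · exact sub_eq_zero.mp (norm_eq_zero.mp (pow_eq_zero_iff (two_ne_zero) |>.mp h))

lemma continuous_lift (V U : Matrix (X × N) (X × N) ℂ) :
    Continuous fun Y : Matrix N N ℂ => Vᴴ * ((1 : Matrix X X ℂ) ⊗ₖ Y) * U := by
  have : Continuous fun Y : Matrix N N ℂ => ((1 : Matrix X X ℂ) ⊗ₖ Y) := by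
    refine continuous_matrix fun i j => ?_
    simp only [kroneckerMap_apply]
    fun_prop
  fun_prop

/-- Letting `s → ∞` in the equality case of monotonicity gives `supp σ (1 ⊗ supp ρ') = supp ρ`,
where `ρ'` is the partial trace of `ρ`. -/
lemma MonoData.eq_supp (D : MonoData ρ σ U V p q U' V' p' q')
    (heq : cross ρ V q - cross (ptr ρ) V' q' =
      ∑ i, p i * Real.log (p i) - ∑ i, p' i * Real.log (p' i)) :
    (V * diagonal (fun j => (ind (q j) : ℂ)) * Vᴴ) *
      ((1 : Matrix X X ℂ) ⊗ₖ (U' * diagonal (fun j => (ind (p' j) : ℂ)) * U'ᴴ)) =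
      U * diagonal (fun j => (ind (p j) : ℂ)) * Uᴴ := by
  set S := U' * diagonal (fun j => (ind (p' j) : ℂ)) * U'ᴴ with hS
  have hlim : Tendsto (fun s : ℝ => (s : ℂ) • optY U' V' p' q' s) atTop (𝓝 S) := by
    have h1 := optim_tendsto_atTop (V'ᴴ * U') (p := p') (q := q')
    have hc : Continuous fun Z : Matrix N N ℂ => V' * Z * U'ᴴ := by fun_prop
    have h2 := (hc.tendsto _).comp h1
    have e : V' * (V'ᴴ * U' * diagonal (fun j => (ind (p' j) : ℂ))) * U'ᴴ = S := by
      rw [hS, ← mul_assoc, ← mul_assoc, D.dσ'.right, one_mul]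
    rw [e] at h2
    refine h2.congr fun s => ?_
    simp [optY]
  have hl : Tendsto (fun s : ℝ => (s : ℂ) • (Vᴴ * ((1 : Matrix X X ℂ) ⊗ₖ optY U' V' p' q' s) * U))
      atTop (𝓝 (Vᴴ * ((1 : Matrix X X ℂ) ⊗ₖ S) * U)) := by
    refine (((continuous_lift V U).tendsto _).comp hlim).congr fun s => ?_
    simp [kronecker_smul]
  have hr := optim_tendsto_atTop (Vᴴ * U) (p := p) (q := q)
  have hent : ∀ j i, q j ≠ 0 → (Vᴴ * ((1 : Matrix X X ℂ) ⊗ₖ S) * U) j i =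
      (Vᴴ * U * diagonal (fun i => (ind (p i) : ℂ))) j i := by
    intro j i hj
    have l1 := tendsto_pi_nhds.mp (tendsto_pi_nhds.mp hl j) i
    have l2 := tendsto_pi_nhds.mp (tendsto_pi_nhds.mp hr j) i
    refine tendsto_nhds_unique_of_eventuallyEq l1 l2 ?_
    filter_upwards [eventually_gt_atTop 0] with s hs
    have hne : q j + s * p i ≠ 0 :=
      (add_pos_of_pos_of_nonneg ((D.hq j).lt_of_ne' hj) (mul_nonneg hs.le (D.hp i))).ne'
    have := D.main.2 heq s hs j i hne
    change (s : ℂ) * _ = (s : ℂ) * _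
    rw [this]
  have hmat : diagonal (fun j => (ind (q j) : ℂ)) * (Vᴴ * ((1 : Matrix X X ℂ) ⊗ₖ S) * U) =
      Vᴴ * U * diagonal (fun i => (ind (p i) : ℂ)) := by
    ext j i
    rw [diagonal_mul]
    by_cases hj : q j = 0
    · have := supp_cond D.dρ D.hp D.hs j i hj
      rw [mul_diagonal]
      by_cases hpi : p i = 0
      · simp [ind, hj, hpi]
      · have hw : (Vᴴ * U) j i = 0 := by
          rcases mul_eq_zero.mp this with h | h
          · exact h
          · exact absurd (Complex.ofReal_eq_zero.mp h) hpi
        simp [ind, hj, hw]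
    · rw [hent j i hj]; simp [ind, hj]
  calc (V * diagonal (fun j => (ind (q j) : ℂ)) * Vᴴ) * ((1 : Matrix X X ℂ) ⊗ₖ S)
      = V * (diagonal (fun j => (ind (q j) : ℂ)) * (Vᴴ * ((1 : Matrix X X ℂ) ⊗ₖ S) * U)) * Uᴴ := by
        simp only [mul_assoc, D.dρ.right, mul_one]
    _ = _ := by
        rw [hmat, ← mul_assoc, ← mul_assoc, D.dσ.right, one_mul]

/-- Letting `s → 0` in the equality case of monotonicity gives `σ (1 ⊗ K) = ρ` with `K = σ'⁻¹ ρ'`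
built from the partial traces, together with the way `1 ⊗ K` intertwines the supports. -/
lemma MonoData.eq_ratio (D : MonoData ρ σ U V p q U' V' p' q')
    (heq : cross ρ V q - cross (ptr ρ) V' q' =
      ∑ i, p i * Real.log (p i) - ∑ i, p' i * Real.log (p' i)) {K : Matrix N N ℂ}
    (hK : K = (V' * diagonal (fun j => ((q' j)⁻¹ : ℂ)) * V'ᴴ) * ptr ρ) :
    σ * ((1 : Matrix X X ℂ) ⊗ₖ K) = ρ ∧
    (V * diagonal (fun j => (ind (q j) : ℂ)) * Vᴴ) * ((1 : Matrix X X ℂ) ⊗ₖ K) =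
      ((1 : Matrix X X ℂ) ⊗ₖ K) * (U * diagonal (fun j => (ind (p j) : ℂ)) * Uᴴ) := by
  have hlim : Tendsto (optY U' V' p' q') (𝓝[>] 0) (𝓝 K) := by
    have h1 := optim_tendsto_zero (V'ᴴ * U') p' q' (supp_cond D.dρ' D.hp' D.hs')
    have hc : Continuous fun Z : Matrix N N ℂ => V' * Z * U'ᴴ := by fun_prop
    have h2 := (hc.tendsto _).comp h1
    have e : V' * (diagonal (fun j => ((q' j)⁻¹ : ℂ)) * (V'ᴴ * U') *
        diagonal (fun j => (p' j : ℂ))) * U'ᴴ = K := by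
      rw [hK]; conv_rhs => rw [D.dρ'.eq]
      simp only [mul_assoc]
    rw [e] at h2
    exact h2
  have hl : Tendsto (fun s : ℝ => (Vᴴ * ((1 : Matrix X X ℂ) ⊗ₖ optY U' V' p' q' s) * U))
      (𝓝[>] 0) (𝓝 (Vᴴ * ((1 : Matrix X X ℂ) ⊗ₖ K) * U)) :=
    ((continuous_lift V U).tendsto _).comp hlim
  have hr := optim_tendsto_zero (Vᴴ * U) p q (supp_cond D.dρ D.hp D.hs)
  have hent : ∀ j i, (q j ≠ 0 ∨ p i ≠ 0) → (Vᴴ * ((1 : Matrix X X ℂ) ⊗ₖ K) * U) j i =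
      (q j : ℂ)⁻¹ * (Vᴴ * U) j i * p i := by
    intro j i hj
    have l1 := tendsto_pi_nhds.mp (tendsto_pi_nhds.mp hl j) i
    have l2 := tendsto_pi_nhds.mp (tendsto_pi_nhds.mp hr j) i
    rw [mul_diagonal, diagonal_mul] at l2
    refine tendsto_nhds_unique_of_eventuallyEq l1 l2 ?_
    filter_upwards [self_mem_nhdsWithin] with s hs
    have hs : 0 < s := hs
    have hne : q j + s * p i ≠ 0 := by
      rcases hj with hj | hj
      · exact (add_pos_of_pos_of_nonneg ((D.hq j).lt_of_ne' hj) (mul_nonneg hs.le (D.hp i))).ne'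
      · exact (add_pos_of_nonneg_of_pos (D.hq j) (mul_pos hs ((D.hp i).lt_of_ne' hj))).ne'
    exact D.main.2 heq s hs j i hne
  have h0 := supp_cond D.dρ D.hp D.hs
  constructor
  · have hmat : diagonal (fun j => (q j : ℂ)) * (Vᴴ * ((1 : Matrix X X ℂ) ⊗ₖ K) * U) =
        Vᴴ * U * diagonal (fun i => (p i : ℂ)) := by
      ext j i
      rw [diagonal_mul, mul_diagonal]
      by_cases hj : q j = 0
      · rw [h0 j i hj, hj]; simp
      · rw [hent j i (Or.inl hj)]
        have : (q j : ℂ) ≠ 0 := by exact_mod_cast hj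
        field_simp
    calc σ * ((1 : Matrix X X ℂ) ⊗ₖ K)
        = V * (diagonal (fun j => (q j : ℂ)) * (Vᴴ * ((1 : Matrix X X ℂ) ⊗ₖ K) * U)) * Uᴴ := by
          rw [D.dσ.eq]; simp only [mul_assoc, D.dρ.right, mul_one]
      _ = _ := by
          rw [hmat, ← mul_assoc, ← mul_assoc, D.dσ.right, one_mul]; exact D.dρ.eq.symm
  · have hmat : diagonal (fun j => (ind (q j) : ℂ)) * (Vᴴ * ((1 : Matrix X X ℂ) ⊗ₖ K) * U) =
        (Vᴴ * ((1 : Matrix X X ℂ) ⊗ₖ K) * U) * diagonal (fun i => (ind (p i) : ℂ)) := by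
      ext j i
      rw [diagonal_mul, mul_diagonal]
      by_cases hj : q j = 0
      · by_cases hi : p i = 0
        · simp [hj, hi, ind]
        · rw [hent j i (Or.inr hi), mul_assoc, h0 j i hj]; simp
      · rw [hent j i (Or.inl hj)]
        by_cases hi : p i = 0
        · simp [hi]
        · simp [ind, hj, hi]
    calc (V * diagonal (fun j => (ind (q j) : ℂ)) * Vᴴ) * ((1 : Matrix X X ℂ) ⊗ₖ K)
        = V * (diagonal (fun j => (ind (q j) : ℂ)) * (Vᴴ * ((1 : Matrix X X ℂ) ⊗ₖ K) * U)) * Uᴴ := by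
          simp only [mul_assoc, D.dρ.right, mul_one]
      _ = (V * Vᴴ) * ((1 : Matrix X X ℂ) ⊗ₖ K) * (U * diagonal (fun j => (ind (p j) : ℂ)) * Uᴴ) := by
          rw [hmat]; simp only [mul_assoc]
      _ = _ := by rw [D.dσ.right, one_mul]

end Mono
end QEnt

/-! ### Strong subadditivity and its equality case -/

namespace QEnt
open Matrix Filter Topology
open scoped Kronecker

section Ext
set_option linter.unusedSectionVars false

variable {n m Z : Type*} [Fintype n] [DecidableEq n] [Fintype m] [DecidableEq m]
  [Fintype Z] [DecidableEq Z]

/-- For a splitting `e : n ≃ m × Z`, the operator `M ⊗ 1`. -/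
def ext (e : n ≃ m × Z) (M : Matrix m m ℂ) : Matrix n n ℂ :=
  (M ⊗ₖ (1 : Matrix Z Z ℂ)).submatrix e e

/-- For a splitting `e : n ≃ m × Z`, the partial trace over `Z`. -/
def trE (e : n ≃ m × Z) (M : Matrix n n ℂ) : Matrix m m ℂ :=
  of fun i j => ∑ z, M (e.symm (i, z)) (e.symm (j, z))

variable (e : n ≃ m × Z)

lemma ext_apply (M : Matrix m m ℂ) (i j : n) :
    ext e M i j = if (e i).2 = (e j).2 then M (e i).1 (e j).1 else 0 := by
  simp [ext, kroneckerMap_apply, one_apply]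

lemma ext_mul (M M' : Matrix m m ℂ) : ext e (M * M') = ext e M * ext e M' := by
  unfold ext
  rw [submatrix_mul_equiv, ← mul_kronecker_mul, one_mul]

lemma ext_one : ext e (1 : Matrix m m ℂ) = 1 := by
  unfold ext
  rw [one_kronecker_one, submatrix_one_equiv]

lemma ext_conjTranspose (M : Matrix m m ℂ) : (ext e M)ᴴ = ext e Mᴴ := by
  unfold ext
  rw [conjTranspose_submatrix, conjTranspose_kronecker, conjTranspose_one]

lemma ext_sub (M M' : Matrix m m ℂ) : ext e (M - M') = ext e M - ext e M' := by
  ext i j; simp only [ext_apply, Matrix.sub_apply]; split_ifs <;> simp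

lemma ext_diagonal (d : m → ℂ) : ext e (diagonal d) = diagonal (fun i => d (e i).1) := by
  ext i j
  rw [ext_apply]
  by_cases h : i = j
  · subst h; simp
  · rw [diagonal_apply_ne _ h]
    split_ifs with h2
    · rw [diagonal_apply_ne]
      intro h3
      exact h (e.injective (Prod.ext h3 h2))
    · rfl

lemma trE_ext_mul (A : Matrix m m ℂ) (M : Matrix n n ℂ) : trE e (ext e A * M) = A * trE e M := by
  ext i j
  simp only [trE, of_apply, Matrix.mul_apply, ext_apply, Equiv.apply_symm_apply, Finset.mul_sum]
  rw [Finset.sum_comm]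
  rw [← e.symm.sum_comp, Fintype.sum_prod_type]
  refine Finset.sum_congr rfl fun k _ => ?_
  rw [Finset.sum_comm]
  refine Finset.sum_congr rfl fun z _ => ?_
  simp

lemma trE_conjTranspose (M : Matrix n n ℂ) : (trE e M)ᴴ = trE e Mᴴ := by
  ext i j
  simp [trE, conjTranspose_apply]

lemma trE_mul_ext (A : Matrix m m ℂ) (M : Matrix n n ℂ) : trE e (M * ext e A) = trE e M * A := by
  have := congrArg conjTranspose (trE_ext_mul e Aᴴ Mᴴ)
  rw [trE_conjTranspose, conjTranspose_mul, conjTranspose_mul, trE_conjTranspose,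
    conjTranspose_conjTranspose, conjTranspose_conjTranspose, ext_conjTranspose,
    conjTranspose_conjTranspose] at this
  exact this

lemma trace_trE (M : Matrix n n ℂ) : (trE e M).trace = M.trace := by
  simp only [trace, diag, trE, of_apply]
  rw [← e.symm.sum_comp, Fintype.sum_prod_type]

lemma trE_posSemidef {M : Matrix n n ℂ} (h : M.PosSemidef) : (trE e M).PosSemidef := by
  have : trE e M = ∑ z, M.submatrix (fun i => e.symm (i, z)) (fun i => e.symm (i, z)) := by
    ext i j; simp [trE, Matrix.sum_apply]
  rw [this]
  exact posSemidef_sum _ fun z _ => h.submatrix _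

lemma ext_isDiagBy {M U : Matrix m m ℂ} {d : m → ℝ} (h : IsDiagBy M U d) :
    IsDiagBy (ext e M) (ext e U) (fun i => d (e i).1) where
  left := by rw [ext_conjTranspose, ← ext_mul, h.left, ext_one]
  eq := by
    rw [h.eq, ext_mul, ext_mul, ext_diagonal, ext_conjTranspose]

lemma ext_diagonal_conj (U : Matrix m m ℂ) (d : m → ℂ) :
    ext e (U * diagonal d * Uᴴ) = ext e U * diagonal (fun i => d (e i).1) * (ext e U)ᴴ := by
  rw [ext_mul, ext_mul, ext_diagonal, ext_conjTranspose]

lemma trE_conj (ρ : Matrix n n ℂ) (U : Matrix m m ℂ) :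
    trE e ((ext e U)ᴴ * ρ * ext e U) = Uᴴ * trE e ρ * U := by
  rw [trE_mul_ext, ext_conjTranspose, trE_ext_mul]

lemma conj_eq_diag {M U : Matrix m m ℂ} {d : m → ℝ} (h : IsDiagBy M U d) :
    Uᴴ * M * U = diagonal (fun i => (d i : ℂ)) := by
  rw [h.eq]
  rw [show Uᴴ * (U * diagonal (fun i => (d i : ℂ)) * Uᴴ) * U =
    (Uᴴ * U) * diagonal (fun i => (d i : ℂ)) * (Uᴴ * U) by simp only [mul_assoc], h.left]
  simp

lemma sum_diag_ext {ρ : Matrix n n ℂ} {U : Matrix m m ℂ} {d : m → ℝ}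
    (h : IsDiagBy (trE e ρ) U d) (i : m) :
    ∑ z, ((ext e U)ᴴ * ρ * ext e U) (e.symm (i, z)) (e.symm (i, z)) = d i := by
  have h2 := congrFun (congrFun ((trE_conj e ρ U).trans (conj_eq_diag h)) i) i
  rw [diagonal_apply_eq] at h2
  exact h2

lemma ext_supp_cond {ρ : Matrix n n ℂ} (hρ : ρ.PosSemidef) {U : Matrix m m ℂ} {d : m → ℝ}
    (h : IsDiagBy (trE e ρ) U d) (j : n) (hj : d (e j).1 = 0) :
    ((ext e U)ᴴ * ρ * ext e U) j j = 0 := by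
  have h2 := sum_diag_ext e h (e j).1
  rw [hj, Complex.ofReal_zero] at h2
  have hps : ((ext e U)ᴴ * ρ * ext e U).PosSemidef := hρ.conjTranspose_mul_mul_same _
  rw [Finset.sum_eq_zero_iff_of_nonneg (fun z _ => hps.diag_nonneg)] at h2
  have := h2 (e j).2 (Finset.mem_univ _)
  simpa using this

lemma cross_ext {ρ : Matrix n n ℂ} {U : Matrix m m ℂ} {d : m → ℝ}
    (h : IsDiagBy (trE e ρ) U d) :
    cross ρ (ext e U) (fun i => d (e i).1) = ∑ i, d i * Real.log (d i) := by
  unfold cross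
  rw [← e.symm.sum_comp, Fintype.sum_prod_type]
  refine Finset.sum_congr rfl fun i _ => ?_
  simp only [Equiv.apply_symm_apply]
  rw [← Finset.sum_mul, ← Complex.re_sum, sum_diag_ext e h, Complex.ofReal_re]

lemma mul_ext_supp {ρ : Matrix n n ℂ} (hρ : ρ.PosSemidef) :
    ext e (supp (trE e ρ)) * ρ = ρ := by
  have hH := (trE_posSemidef e hρ).1
  have h := mul_eq_zero_of_trace hρ (ext e (1 - supp (trE e ρ))) (by
    rw [ext_conjTranspose, ← trace_trE e, trE_mul_ext, trE_ext_mul, sub_mul, one_mul,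
      supp_mul_self hH, sub_self, zero_mul, trace_zero])
  rw [ext_sub, ext_one, sub_mul, one_mul, sub_eq_zero] at h
  exact h.symm

lemma ext_supp_mul {ρ : Matrix n n ℂ} (hρ : ρ.PosSemidef) :
    ρ * ext e (supp (trE e ρ)) = ρ := by
  have := congrArg conjTranspose (mul_ext_supp e hρ)
  rwa [conjTranspose_mul, hρ.1.eq, ext_conjTranspose, (supp_isHermitian _).eq] at this

end Ext

section Tri
set_option linter.unusedSectionVars false

variable {X Y Z : Type*} [Fintype X] [DecidableEq X] [Fintype Y] [DecidableEq Y]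
  [Fintype Z] [DecidableEq Z]

/-- The splitting of `X × Y × Z` with `X × Y` as the first part. -/
abbrev eXY : X × Y × Z ≃ (X × Y) × Z := (Equiv.prodAssoc X Y Z).symm

lemma ptr_posSemidef {M : Matrix (X × Y) (X × Y) ℂ} (h : M.PosSemidef) : (ptr M).PosSemidef := by
  have : ptr M = ∑ x, M.submatrix (fun i => (x, i)) (fun i => (x, i)) := by
    ext i j; simp [ptr, Matrix.sum_apply]
  rw [this]
  exact posSemidef_sum _ fun z _ => h.submatrix _

lemma ptr_ext (M : Matrix (X × Y) (X × Y) ℂ) :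
    ptr (ext (eXY (Z := Z)) M) = ext (Equiv.refl (Y × Z)) (ptr M) := by
  ext ⟨y, z⟩ ⟨y', z'⟩
  simp only [ptr, of_apply, ext_apply]
  simp only [Equiv.prodAssoc_symm_apply, Equiv.refl_apply, Finset.sum_ite_irrel,
    Finset.sum_const_zero]
  rfl

lemma trE_ptr (ρ : Matrix (X × Y × Z) (X × Y × Z) ℂ) :
    trE (Equiv.refl (Y × Z)) (ptr ρ) = ptr (trE eXY ρ) := by
  ext y y'
  simp only [trE, ptr, of_apply]
  exact Finset.sum_comm

lemma monoData_tri {ρ : Matrix (X × Y × Z) (X × Y × Z) ℂ} (hρ : ρ.PosSemidef)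
    {U : Matrix (X × Y × Z) (X × Y × Z) ℂ} {p : X × Y × Z → ℝ}
    {V : Matrix (X × Y) (X × Y) ℂ} {q : X × Y → ℝ} {U' : Matrix (Y × Z) (Y × Z) ℂ} {p' : Y × Z → ℝ}
    {V' : Matrix Y Y ℂ} {q' : Y → ℝ}
    (h1 : IsDiagBy ρ U p) (h2 : IsDiagBy (trE eXY ρ) V q) (h3 : IsDiagBy (ptr ρ) U' p')
    (h4 : IsDiagBy (ptr (trE eXY ρ)) V' q') (hp : ∀ i, 0 ≤ p i) (hq : ∀ i, 0 ≤ q i)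
    (hp' : ∀ i, 0 ≤ p' i) (hq' : ∀ i, 0 ≤ q' i) :
    MonoData ρ (ext eXY (trE eXY ρ)) U (ext eXY V) p (fun i => q (eXY i).1) U'
      (ext (Equiv.refl (Y × Z)) V') p' (fun i => q' (Equiv.refl (Y × Z) i).1) where
  dρ := h1
  dσ := ext_isDiagBy _ h2
  dρ' := h3
  dσ' := by rw [ptr_ext]; exact ext_isDiagBy _ h4
  hp := hp
  hq := fun _ => hq _
  hp' := hp'
  hq' := fun _ => hq' _
  hs := fun j hj => ext_supp_cond _ hρ h2 j hj
  hs' := fun j hj => ext_supp_cond _ (ptr_posSemidef hρ) (by rw [trE_ptr]; exact h4) j hj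

variable {ρ : Matrix (X × Y × Z) (X × Y × Z) ℂ}

/-- Strong subadditivity: monotonicity of the relative entropy of `ρ_XYZ` and `ρ_XY ⊗ 1` under the
partial trace over `X`. -/
theorem ssa (hρ : ρ.PosSemidef) :
    vNEntropy ρ + vNEntropy (ptr (trE eXY ρ)) ≤ vNEntropy (trE eXY ρ) + vNEntropy (ptr ρ) := by
  have p2 := trE_posSemidef eXY hρ
  have p3 := ptr_posSemidef hρ
  have p4 := ptr_posSemidef p2
  have d1 := isDiagBy_eigen hρ.1
  have d2 := isDiagBy_eigen p2.1
  have d3 := isDiagBy_eigen p3.1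
  have d4 := isDiagBy_eigen p4.1
  have D := monoData_tri hρ d1 d2 d3 d4 hρ.eigenvalues_nonneg p2.eigenvalues_nonneg
    p3.eigenvalues_nonneg p4.eigenvalues_nonneg
  have h := D.main.1
  rw [cross_ext _ d2, cross_ext _ (by rw [trE_ptr]; exact d4)] at h
  have l2 : 0 < Real.log 2 := Real.log_pos (by norm_num)
  have e1 := d1.vNEntropy_eq
  have e2 := d2.vNEntropy_eq
  have e3 := d3.vNEntropy_eq
  have e4 := d4.vNEntropy_eq
  refine le_of_mul_le_mul_right ?_ l2
  rw [add_mul, add_mul, e1, e2, e3, e4]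
  linarith

/-- `(ρ_Y⁻¹ ⊗ 1) ρ_YZ`, with the pseudo-inverse of `ρ_Y`. -/
noncomputable def ratio (ρ : Matrix (X × Y × Z) (X × Y × Z) ℂ) : Matrix (Y × Z) (Y × Z) ℂ :=
  ext (Equiv.refl (Y × Z)) (pinv (ptr (trE eXY ρ))) * ptr ρ

/-- Equality in strong subadditivity, `I(X;Z|Y) = 0`, gives `supp ρ_XY · supp ρ_YZ = supp ρ` and
`ρ_XY ρ_Y⁻¹ ρ_YZ = ρ`, and `ρ_Y⁻¹ ρ_YZ` commutes with `supp ρ_XY`. -/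
theorem ssa_eq (hρ : ρ.PosSemidef)
    (h : vNEntropy (trE eXY ρ) + vNEntropy (ptr ρ) - vNEntropy ρ - vNEntropy (ptr (trE eXY ρ)) = 0) :
    ext eXY (supp (trE eXY ρ)) * ((1 : Matrix X X ℂ) ⊗ₖ supp (ptr ρ)) = supp ρ ∧
    ext eXY (trE eXY ρ) * ((1 : Matrix X X ℂ) ⊗ₖ ratio ρ) = ρ ∧
    ext eXY (supp (trE eXY ρ)) * ((1 : Matrix X X ℂ) ⊗ₖ ratio ρ) =
      ((1 : Matrix X X ℂ) ⊗ₖ ratio ρ) * ext eXY (supp (trE eXY ρ)) := by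
  have p2 := trE_posSemidef eXY hρ
  have p3 := ptr_posSemidef hρ
  have p4 := ptr_posSemidef p2
  have d1 := isDiagBy_eigen hρ.1
  have d2 := isDiagBy_eigen p2.1
  have d3 := isDiagBy_eigen p3.1
  have d4 := isDiagBy_eigen p4.1
  have D := monoData_tri hρ d1 d2 d3 d4 hρ.eigenvalues_nonneg p2.eigenvalues_nonneg
    p3.eigenvalues_nonneg p4.eigenvalues_nonneg
  have e1 := d1.vNEntropy_eq
  have e2 := d2.vNEntropy_eq
  have e3 := d3.vNEntropy_eq
  have e4 := d4.vNEntropy_eq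
  have heq : cross ρ (ext eXY (p2.1.eigenvectorUnitary : Matrix _ _ ℂ))
      (fun i => p2.1.eigenvalues (eXY i).1) - cross (ptr ρ)
      (ext (Equiv.refl (Y × Z)) (p4.1.eigenvectorUnitary : Matrix _ _ ℂ))
      (fun i => p4.1.eigenvalues (Equiv.refl (Y × Z) i).1) =
      ∑ i, hρ.1.eigenvalues i * Real.log (hρ.1.eigenvalues i) -
      ∑ i, p3.1.eigenvalues i * Real.log (p3.1.eigenvalues i) := by
    rw [cross_ext _ d2, cross_ext _ (by rw [trE_ptr]; exact d4)]
    have := congrArg (· * Real.log 2) h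
    simp only [sub_mul, add_mul, zero_mul, e1, e2, e3, e4] at this
    linarith
  have s1 : supp ρ = _ := dif_pos hρ.1
  have s2 : supp (trE eXY ρ) = _ := dif_pos p2.1
  have s3 : supp (ptr ρ) = _ := dif_pos p3.1
  have s4 : pinv (ptr (trE eXY ρ)) = _ := dif_pos p4.1
  have hE1 : ext eXY (supp (trE eXY ρ)) * ((1 : Matrix X X ℂ) ⊗ₖ supp (ptr ρ)) = supp ρ := by
    rw [s1, s2, s3, ext_diagonal_conj]
    exact D.eq_supp heq
  have hE2 := D.eq_ratio heq (K := ratio ρ) (by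
    rw [ratio, s4, ext_diagonal_conj]
    push_cast
    rfl)
  refine ⟨hE1, hE2.1, ?_⟩
  have hE3 : ext eXY (supp (trE eXY ρ)) * ((1 : Matrix X X ℂ) ⊗ₖ ratio ρ) =
      ((1 : Matrix X X ℂ) ⊗ₖ ratio ρ) * supp ρ := by
    rw [s1, s2, ext_diagonal_conj]
    exact hE2.2
  have hE1' := congrArg conjTranspose hE1
  rw [conjTranspose_mul, ext_conjTranspose, conjTranspose_kronecker, conjTranspose_one,
    (supp_isHermitian _).eq, (supp_isHermitian _).eq, (supp_isHermitian _).eq] at hE1'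
  have hK : ratio ρ * supp (ptr ρ) = ratio ρ := by
    rw [ratio, mul_assoc, self_mul_supp p3.1]
  rw [hE3, ← hE1', ← mul_assoc, ← mul_kronecker_mul, hK, one_mul]

end Tri
end QEnt

/-! ### States with `I(A;C|B) = I(B;C|A) = 0` -/

namespace QEnt
open Matrix
open scoped Kronecker

section Algebra
set_option linter.unusedSectionVars false

variable {n ι : Type*} [Fintype n] [DecidableEq n]

/-- Two families `X`, `X'` of operators with `h X c c' = h X' c c'`, taken from commuting
`*`-algebras and commuting with the support of `h`. Below, `h` is a state of `AB`, and `X`, `X'`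
act on `B` and on `A` respectively. -/
structure TwoSided (h : Matrix n n ℂ) (X X' : ι → ι → Matrix n n ℂ) : Prop where
  psd : h.PosSemidef
  eq : ∀ c c', h * X c c' = h * X' c c'
  herm : ∀ c c', (h * X c c')ᴴ = h * X c' c
  comm : ∀ c c', supp h * X c c' = X c c' * supp h
  comm' : ∀ c c', supp h * X' c c' = X' c c' * supp h
  cross : ∀ c c' d d', X' c c' * X d d' = X d d' * X' c c'
  crossH : ∀ c c' d d', X' c c' * (X d d')ᴴ = (X d d')ᴴ * X' c c'

variable {h : Matrix n n ℂ} {X X' : ι → ι → Matrix n n ℂ}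

lemma TwoSided.symm (D : TwoSided h X X') : TwoSided h X' X where
  psd := D.psd
  eq := fun c c' => (D.eq c c').symm
  herm := fun c c' => by rw [← D.eq, ← D.eq, D.herm]
  comm := D.comm'
  comm' := D.comm
  cross := fun c c' d d' => (D.cross d d' c c').symm
  crossH := fun c c' d d' => by
    have := congrArg conjTranspose (D.crossH d d' c c')
    rw [conjTranspose_mul, conjTranspose_mul, conjTranspose_conjTranspose] at this
    exact this

lemma TwoSided.proj (D : TwoSided h X X') (c c' : ι) : X c c' * supp h = X' c c' * supp h := by
  rw [← D.comm, ← D.comm', ← pinv_mul_self D.psd.1, mul_assoc, mul_assoc, D.eq]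

lemma TwoSided.projH (D : TwoSided h X X') (c c' : ι) :
    (X c c')ᴴ * supp h = (X' c c')ᴴ * supp h := by
  have := congrArg conjTranspose ((D.comm c c').trans ((D.proj c c').trans (D.comm' c c').symm))
  rwa [conjTranspose_mul, conjTranspose_mul, (supp_isHermitian h).eq] at this

lemma TwoSided.star_mul (D : TwoSided h X X') (c c' : ι) : (X c' c)ᴴ * h = h * X c c' := by
  rw [← D.herm c' c, conjTranspose_mul, D.psd.1.eq]

/-- `X c c'` is normal on the support of `h`, because its adjoint can be exchanged there for the
adjoint of `X' c c'`, which commutes with it. -/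
lemma TwoSided.normal (D : TwoSided h X X') (c c' : ι) :
    X c c' * (X c c')ᴴ * supp h = (X c c')ᴴ * X c c' * supp h := by
  rw [mul_assoc, D.projH, ← mul_assoc]
  have : X c c' * (X' c c')ᴴ = (X' c c')ᴴ * X c c' := by
    have := congrArg conjTranspose (D.crossH c c' c c')
    rw [conjTranspose_mul, conjTranspose_mul, conjTranspose_conjTranspose] at this
    exact this
  rw [this, mul_assoc, ← D.comm, ← mul_assoc, ← D.projH, mul_assoc, D.comm, mul_assoc]

/-- With `x = X c c'` and `z = (X c' c)ᴴ` one has `z h = h x`; by normality and by exchanging `X`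
with `X'`, all four terms of `tr (z - x) h (z - x)ᴴ` have the same value up to sign and cancel. -/
lemma TwoSided.star_eq (D : TwoSided h X X') (c c' : ι) : (X c' c)ᴴ * h = X c c' * h := by
  have hH : hᴴ = h := D.psd.1
  set x := X c c' with hx
  set z := (X c' c)ᴴ with hz
  have e1 : z * h = h * x := D.star_mul c c'
  have e1H : h * zᴴ = xᴴ * h := by
    have := congrArg conjTranspose e1
    rwa [conjTranspose_mul, conjTranspose_mul, hH] at this
  have t1 : (z * h * zᴴ).trace = (h * (x * xᴴ)).trace := by
    have hc : X' c c' * zᴴ = zᴴ * X' c c' := by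
      rw [hz, conjTranspose_conjTranspose]; exact D.cross c c' c' c
    have : z * h * zᴴ = xᴴ * (h * x) := by
      rw [e1, D.eq, mul_assoc, hc, ← mul_assoc, e1H, mul_assoc]
    rw [this, trace_mul_comm, mul_assoc]
  have t2 : (z * h * xᴴ).trace = (h * (x * xᴴ)).trace := by rw [e1, mul_assoc]
  have t3 : (x * h * zᴴ).trace = (h * (x * xᴴ)).trace := by
    rw [mul_assoc, e1H, ← mul_assoc, trace_mul_comm]
  have t4 : (x * h * xᴴ).trace = (h * (x * xᴴ)).trace := by
    rw [trace_mul_comm, ← mul_assoc, trace_mul_comm, ← self_mul_supp D.psd.1,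
      mul_assoc h (supp h), trace_mul_comm h, mul_assoc h (supp h), trace_mul_comm h,
      trace_mul_comm _ h, trace_mul_comm _ h]
    have hP := (supp_isHermitian h).eq
    have n1 := congrArg conjTranspose (D.normal c c')
    simp only [conjTranspose_mul, conjTranspose_conjTranspose, hP] at n1
    rw [← hx] at n1
    rw [n1]
  have t0 : ((z - x) * h * (z - x)ᴴ).trace = 0 := by
    rw [conjTranspose_sub, sub_mul, sub_mul, mul_sub, mul_sub, trace_sub, trace_sub, trace_sub,
      t1, t2, t3, t4]
    ring
  have := mul_eq_zero_of_trace D.psd _ t0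
  rwa [sub_mul, sub_eq_zero] at this

lemma TwoSided.comm_h (D : TwoSided h X X') (c c' : ι) : X c c' * h = h * X c c' := by
  rw [← D.star_eq, D.star_mul]

lemma TwoSided.comm_family (D : TwoSided h X X') (c c' d d' : ι) :
    X c c' * X d d' * h = X d d' * X c c' * h := by
  have e : X d d' * h = X' d d' * h := by
    rw [← supp_mul_self D.psd.1, ← mul_assoc, D.proj, mul_assoc]
  calc X c c' * X d d' * h = X c c' * (X' d d' * h) := by rw [mul_assoc, e]
    _ = X' d d' * (X c c' * h) := by rw [← mul_assoc, ← D.cross, mul_assoc]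
    _ = X' d d' * h * X c c' := by rw [D.comm_h, mul_assoc]
    _ = X d d' * (h * X c c') := by rw [← e, mul_assoc]
    _ = _ := by rw [← D.comm_h, mul_assoc]

lemma TwoSided.eq_left (D : TwoSided h X X') (c c' : ι) : X c c' * h = X' c c' * h := by
  rw [D.comm_h, D.symm.comm_h, D.eq]

end Algebra

section Struct
set_option linter.unusedSectionVars false

variable {A B C : Type*} [Fintype A] [DecidableEq A] [Fintype B] [DecidableEq B]
  [Fintype C] [DecidableEq C]

/-- The `(c, d)` block of an operator on `A × B × C`. -/
def blk (T : Matrix (A × B × C) (A × B × C) ℂ) (c d : C) : Matrix (A × B) (A × B) ℂ :=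
  of fun p q => T (p.1, p.2, c) (q.1, q.2, d)

/-- The `(c, d)` block of an operator on `B × C`. -/
def comp (K : Matrix (B × C) (B × C) ℂ) (c d : C) : Matrix B B ℂ :=
  of fun p q => K (p, c) (q, d)

lemma blk_ext_mul (M : Matrix (A × B) (A × B) ℂ) (T : Matrix (A × B × C) (A × B × C) ℂ) (c c' : C) :
    blk (ext eXY M * T) c c' = M * blk T c c' := by
  ext ⟨a, b⟩ ⟨a', b'⟩
  simp only [blk, of_apply, Matrix.mul_apply, ext_apply, Fintype.sum_prod_type]
  simp

lemma blk_mul_ext (M : Matrix (A × B) (A × B) ℂ) (T : Matrix (A × B × C) (A × B × C) ℂ) (c c' : C) :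
    blk (T * ext eXY M) c c' = blk T c c' * M := by
  ext ⟨a, b⟩ ⟨a', b'⟩
  simp only [blk, of_apply, Matrix.mul_apply, ext_apply, Fintype.sum_prod_type]
  simp

lemma blk_kron (K : Matrix (B × C) (B × C) ℂ) (c c' : C) :
    blk ((1 : Matrix A A ℂ) ⊗ₖ K) c c' = (1 : Matrix A A ℂ) ⊗ₖ comp K c c' := by
  ext ⟨a, b⟩ ⟨a', b'⟩
  simp [blk, comp, kroneckerMap_apply]

lemma ext_refl_apply (M : Matrix B B ℂ) (b b' : B) (c c' : C) :
    ext (Equiv.refl (B × C)) M (b, c) (b', c') = if c = c' then M b b' else 0 :=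
  ext_apply _ _ _ _

lemma comp_ext_mul (M : Matrix B B ℂ) (T : Matrix (B × C) (B × C) ℂ) (c c' : C) :
    comp (ext (Equiv.refl _) M * T) c c' = M * comp T c c' := by
  ext b b'
  simp only [comp, of_apply, Matrix.mul_apply, ext_refl_apply, Fintype.sum_prod_type]
  simp

lemma comp_mul_ext (M : Matrix B B ℂ) (T : Matrix (B × C) (B × C) ℂ) (c c' : C) :
    comp (T * ext (Equiv.refl _) M) c c' = comp T c c' * M := by
  ext b b'
  simp only [comp, of_apply, Matrix.mul_apply, ext_refl_apply, Fintype.sum_prod_type]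
  simp

lemma ptr_kron_mul (x : Matrix B B ℂ) (M : Matrix (A × B) (A × B) ℂ) :
    ptr (((1 : Matrix A A ℂ) ⊗ₖ x) * M) = x * ptr M := by
  ext b b'
  simp only [ptr, of_apply, Matrix.mul_apply, kroneckerMap_apply, Fintype.sum_prod_type, one_apply,
    ite_mul, one_mul, zero_mul, Finset.sum_ite_irrel, Finset.sum_const_zero, Finset.sum_ite_eq,
    Finset.mem_univ, if_true, Finset.mul_sum]
  exact Finset.sum_comm

lemma ptr_conjTranspose (M : Matrix (A × B) (A × B) ℂ) : (ptr M)ᴴ = ptr Mᴴ := by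
  ext i j
  simp [ptr, conjTranspose_apply]

lemma ptr_mul_kron (x : Matrix B B ℂ) (M : Matrix (A × B) (A × B) ℂ) :
    ptr (M * ((1 : Matrix A A ℂ) ⊗ₖ x)) = ptr M * x := by
  have := congrArg conjTranspose (ptr_kron_mul (A := A) xᴴ Mᴴ)
  rw [ptr_conjTranspose, conjTranspose_mul, conjTranspose_mul, ptr_conjTranspose,
    conjTranspose_conjTranspose, conjTranspose_conjTranspose, conjTranspose_kronecker,
    conjTranspose_one, conjTranspose_conjTranspose] at this
  exact this

/-- Consequences of equality in strong subadditivity, in terms of blocks. -/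
lemma ssa_eq_comp {ρ : Matrix (A × B × C) (A × B × C) ℂ} (hρ : ρ.PosSemidef)
    (h : vNEntropy (trE eXY ρ) + vNEntropy (ptr ρ) - vNEntropy ρ - vNEntropy (ptr (trE eXY ρ)) = 0) :
    ∃ x : C → C → Matrix B B ℂ,
      (∀ c c', trE eXY ρ * ((1 : Matrix A A ℂ) ⊗ₖ x c c') = blk ρ c c') ∧
      (∀ c c', supp (trE eXY ρ) * ((1 : Matrix A A ℂ) ⊗ₖ x c c') =
        ((1 : Matrix A A ℂ) ⊗ₖ x c c') * supp (trE eXY ρ)) ∧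
      (∀ c c', supp (ptr (trE eXY ρ)) * x c c' = x c c') ∧
      (∀ c c', x c c' * supp (ptr (trE eXY ρ)) = x c c') := by
  obtain ⟨-, h2, h3⟩ := ssa_eq hρ h
  refine ⟨comp (ratio ρ), fun c c' => ?_, fun c c' => ?_, fun c c' => ?_, fun c c' => ?_⟩
  · rw [← blk_kron, ← blk_ext_mul, h2]
  · rw [← blk_kron, ← blk_ext_mul, ← blk_mul_ext, h3]
  · rw [← comp_ext_mul, ratio, ← mul_assoc, ← ext_mul, supp_mul_pinv]
  · rw [← comp_mul_ext, ratio, mul_assoc, ← trE_ptr, ext_supp_mul _ (ptr_posSemidef hρ)]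

/-- The blocks `x c c'` form a Hermitian-symmetric commuting family which commutes with `r`. -/
structure CommFam (r : Matrix B B ℂ) (x : C → C → Matrix B B ℂ) : Prop where
  star : ∀ c c', (x c' c)ᴴ = x c c'
  comm : ∀ c c' d d', x c c' * x d d' = x d d' * x c c'
  commr : ∀ c c', x c c' * r = r * x c c'

lemma commFam_of {h : Matrix (A × B) (A × B) ℂ} {x : C → C → Matrix B B ℂ}
    {X' : C → C → Matrix (A × B) (A × B) ℂ}
    (D : TwoSided h (fun c c' => (1 : Matrix A A ℂ) ⊗ₖ x c c') X')
    (h1 : ∀ c c', supp (ptr h) * x c c' = x c c') (h2 : ∀ c c', x c c' * supp (ptr h) = x c c') :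
    CommFam (ptr h) x := by
  have hr := (ptr_posSemidef D.psd).1
  have h1H : ∀ c c', (x c c')ᴴ * supp (ptr h) = (x c c')ᴴ := fun c c' => by
    have := congrArg conjTranspose (h1 c c')
    rwa [conjTranspose_mul, (supp_isHermitian _).eq] at this
  have cancel : ∀ {y y' : Matrix B B ℂ}, y * ptr h = y' * ptr h →
      y * supp (ptr h) = y' * supp (ptr h) := fun hy => by
    rw [← self_mul_pinv hr, ← mul_assoc, ← mul_assoc, hy]
  refine ⟨fun c c' => ?_, fun c c' d d' => ?_, fun c c' => ?_⟩
  · have e := congrArg ptr (D.star_eq c c')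
    simp only [conjTranspose_kronecker, conjTranspose_one, ptr_kron_mul] at e
    rw [← h1H, ← h2 c c']
    exact cancel e
  · have e := congrArg ptr (D.comm_family c c' d d')
    simp only [← mul_kronecker_mul, one_mul, ptr_kron_mul] at e
    rw [← h2 d d', ← mul_assoc, cancel e, mul_assoc, h2]
    congr 1
    exact (h2 d d').symm
  · have e := congrArg ptr (D.comm_h c c')
    simpa only [ptr_kron_mul, ptr_mul_kron] using e

/-- Exchange of the first two parties. -/
def swp (ρ : Matrix (A × B × C) (A × B × C) ℂ) : Matrix (B × A × C) (B × A × C) ℂ :=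
  ρ.submatrix (fun t => (t.2.1, t.1, t.2.2)) (fun t => (t.2.1, t.1, t.2.2))

lemma swp_posSemidef {ρ : Matrix (A × B × C) (A × B × C) ℂ} (hρ : ρ.PosSemidef) :
    (swp ρ).PosSemidef := hρ.submatrix _

lemma trE_swp (ρ : Matrix (A × B × C) (A × B × C) ℂ) :
    trE eXY (swp ρ) = (trE eXY ρ).submatrix (Equiv.prodComm B A) (Equiv.prodComm B A) := by
  ext ⟨b, a⟩ ⟨b', a'⟩
  simp [trE, swp]

lemma supp_unique {n : Type*} [Fintype n] [DecidableEq n] {M P g : Matrix n n ℂ}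
    (hM : M.IsHermitian) (hP : P.IsHermitian) (h1 : P * M = M) (h2 : P = M * g) : P = supp M := by
  have e1 : supp M * P = P := by rw [h2, ← mul_assoc, supp_mul_self hM]
  have e2 : P * supp M = supp M := by rw [← self_mul_pinv hM, ← mul_assoc, h1]
  have e3 := congrArg conjTranspose e2
  rw [conjTranspose_mul, hP.eq, (supp_isHermitian M).eq, e1] at e3
  exact e3

lemma supp_submatrix {n m : Type*} [Fintype n] [DecidableEq n] [Fintype m] [DecidableEq m]
    {M : Matrix n n ℂ} (hM : M.IsHermitian) (e : m ≃ n) :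
    supp (M.submatrix e e) = (supp M).submatrix e e := by
  refine (supp_unique (g := (pinv M).submatrix e e) (hM.submatrix e)
    ((supp_isHermitian M).submatrix e) ?_ ?_).symm
  · rw [submatrix_mul_equiv, supp_mul_self hM]
  · rw [submatrix_mul_equiv, self_mul_pinv hM]

lemma TwoSided.submatrix {n m ι : Type*} [Fintype n] [DecidableEq n] [Fintype m] [DecidableEq m]
    {h : Matrix n n ℂ} {X X' : ι → ι → Matrix n n ℂ} (D : TwoSided h X X') (e : m ≃ n) :
    TwoSided (h.submatrix e e) (fun c c' => (X c c').submatrix e e)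
      (fun c c' => (X' c c').submatrix e e) where
  psd := D.psd.submatrix e
  eq := fun c c' => by simp only [submatrix_mul_equiv, D.eq]
  herm := fun c c' => by simp only [submatrix_mul_equiv, conjTranspose_submatrix, D.herm]
  comm := fun c c' => by simp only [supp_submatrix D.psd.1, submatrix_mul_equiv, D.comm]
  comm' := fun c c' => by simp only [supp_submatrix D.psd.1, submatrix_mul_equiv, D.comm']
  cross := fun c c' d d' => by simp only [submatrix_mul_equiv, D.cross]
  crossH := fun c c' d d' => by
    simp only [submatrix_mul_equiv, conjTranspose_submatrix, D.crossH]

lemma kron_swap (x : Matrix A A ℂ) :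
    (1 : Matrix B B ℂ) ⊗ₖ x =
      (x ⊗ₖ (1 : Matrix B B ℂ)).submatrix (Equiv.prodComm B A) (Equiv.prodComm B A) := by
  ext ⟨b, a⟩ ⟨b', a'⟩
  simp [kroneckerMap_apply, mul_comm]

lemma ptr_swap (h : Matrix (A × B) (A × B) ℂ) :
    ptr (h.submatrix (Equiv.prodComm B A) (Equiv.prodComm B A)) = trE (Equiv.refl _) h := by
  ext a a'
  simp [ptr, trE]

lemma blk_swp (ρ : Matrix (A × B × C) (A × B × C) ℂ) (c c' : C) :
    blk (swp ρ) c c' = (blk ρ c c').submatrix (Equiv.prodComm B A) (Equiv.prodComm B A) := by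
  ext ⟨b, a⟩ ⟨b', a'⟩
  simp [blk, swp]

lemma submatrix_inj {n m : Type*} (e : m ≃ n) {M M' : Matrix n n ℂ}
    (h : M.submatrix e e = M'.submatrix e e) : M = M' := by
  have := congrArg (fun T => T.submatrix e.symm e.symm) h
  simpa using this

lemma blk_conjTranspose (ρ : Matrix (A × B × C) (A × B × C) ℂ) (c c' : C) :
    (blk ρ c c')ᴴ = blk ρᴴ c' c := by
  ext i j; simp [blk, conjTranspose_apply]

/-- The algebraic structure of a state on `ABC` with `I(A;C|B) = I(B;C|A) = 0`: its blocks are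
`ρ_AB (1 ⊗ x c c')` for a commuting family on `B`, and `ρ_AB` intertwines this family with a
commuting family on `A`. -/
theorem struct_ABC {ρ : Matrix (A × B × C) (A × B × C) ℂ} (hρ : ρ.PosSemidef)
    (h1 : vNEntropy (trE eXY ρ) + vNEntropy (ptr ρ) - vNEntropy ρ - vNEntropy (ptr (trE eXY ρ)) = 0)
    (h2 : vNEntropy (trE eXY (swp ρ)) + vNEntropy (ptr (swp ρ)) - vNEntropy (swp ρ)
      - vNEntropy (ptr (trE eXY (swp ρ))) = 0) :
    ∃ (x : C → C → Matrix B B ℂ) (x' : C → C → Matrix A A ℂ),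
      CommFam (ptr (trE eXY ρ)) x ∧ CommFam (trE (Equiv.refl _) (trE eXY ρ)) x' ∧
      (∀ c c', trE eXY ρ * ((1 : Matrix A A ℂ) ⊗ₖ x c c') = blk ρ c c') ∧
      (∀ c c', ((1 : Matrix A A ℂ) ⊗ₖ x c c') * trE eXY ρ = (x' c c' ⊗ₖ (1 : Matrix B B ℂ)) *
        trE eXY ρ) := by
  obtain ⟨x, a1, a2, a3, a4⟩ := ssa_eq_comp hρ h1
  obtain ⟨x', b1, b2, b3, b4⟩ := ssa_eq_comp (swp_posSemidef hρ) h2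
  have p2 := trE_posSemidef eXY hρ
  have b1' : ∀ c c', trE eXY ρ * (x' c c' ⊗ₖ (1 : Matrix B B ℂ)) = blk ρ c c' := fun c c' => by
    refine submatrix_inj (Equiv.prodComm B A) ?_
    rw [← blk_swp, ← b1, kron_swap, trE_swp, submatrix_mul_equiv]
  have b2' : ∀ c c', supp (trE eXY ρ) * (x' c c' ⊗ₖ (1 : Matrix B B ℂ)) =
      (x' c c' ⊗ₖ (1 : Matrix B B ℂ)) * supp (trE eXY ρ) := fun c c' => by
    refine submatrix_inj (Equiv.prodComm B A) ?_
    have := b2 c c'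
    rw [kron_swap, trE_swp, supp_submatrix p2.1, submatrix_mul_equiv, submatrix_mul_equiv] at this
    exact this
  have D : TwoSided (trE eXY ρ) (fun c c' => (1 : Matrix A A ℂ) ⊗ₖ x c c')
      (fun c c' => x' c c' ⊗ₖ (1 : Matrix B B ℂ)) :=
    { psd := p2
      eq := fun c c' => by rw [a1, b1']
      herm := fun c c' => by rw [a1, a1, blk_conjTranspose, hρ.1.eq]
      comm := a2
      comm' := b2'
      cross := fun c c' d d' => by
        rw [← mul_kronecker_mul, ← mul_kronecker_mul, one_mul, mul_one, one_mul, mul_one]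
      crossH := fun c c' d d' => by
        rw [conjTranspose_kronecker, conjTranspose_one, ← mul_kronecker_mul, ← mul_kronecker_mul,
          one_mul, mul_one, one_mul, mul_one] }
  refine ⟨x, x', commFam_of D a3 a4, ?_, a1, D.eq_left⟩
  have D' := D.symm.submatrix (Equiv.prodComm B A)
  simp only [← kron_swap, ← trE_swp] at D'
  rw [← ptr_swap, ← trE_swp]
  exact commFam_of D' b3 b4

end Struct
end QEnt

/-! ### Joint diagonalisation -/

namespace QEnt
open Matrix
open scoped Kronecker

section JointDiag
set_option linter.unusedSectionVars false

variable {n ι : Type*} [Fintype n] [DecidableEq n]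

theorem exists_joint_diag {T : ι → Matrix n n ℂ} (hT : ∀ i, (T i).IsHermitian)
    (hC : ∀ i j, T i * T j = T j * T i) :
    ∃ U : Matrix n n ℂ, ∃ d : ι → n → ℝ, Uᴴ * U = 1 ∧ ∀ i, IsDiagBy (T i) U (d i) := by
  classical
  let L : ι → (EuclideanSpace ℂ n →ₗ[ℂ] EuclideanSpace ℂ n) := fun i => toEuclideanLin (T i)
  have hL : ∀ i, (L i).IsSymmetric := fun i => isSymmetric_toEuclideanLin_iff.mpr (hT i)
  have hLC : Pairwise (Function.onFun Commute L) := by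
    intro i j _
    change L i * L j = L j * L i
    refine LinearMap.ext fun v => ?_
    simp only [L, Module.End.mul_apply, toLpLin_apply, mulVec_mulVec, hC i j]
  have hInt := LinearMap.IsSymmetric.directSum_isInternal_of_pairwise_commute hL hLC
  have hind := hInt.submodule_iSupIndep
  have hInt' := DirectSum.isInternal_ne_bot_iff.mpr hInt
  have hort := (LinearMap.IsSymmetric.orthogonalFamily_iInf_eigenspaces hL).comp
    (Subtype.val_injective (p := fun γ : ι → ℂ => (⨅ j, Module.End.eigenspace (L j) (γ j)) ≠ ⊥))
  have : Fintype {γ : ι → ℂ // (⨅ j, Module.End.eigenspace (L j) (γ j)) ≠ ⊥} :=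
    hind.fintypeNeBotOfFiniteDimensional
  have hcard : Module.finrank ℂ (EuclideanSpace ℂ n) = Fintype.card n := finrank_euclideanSpace
  let b0 := hInt'.subordinateOrthonormalBasis hcard hort
  let e := Fintype.equivFin n
  let g : n → ι → ℂ := fun k => (hInt'.subordinateOrthonormalBasisIndex hcard (e k) hort).1
  have hsub : ∀ k i, L i (b0 (e k)) = g k i • b0 (e k) := by
    intro k i
    have := hInt'.subordinateOrthonormalBasis_subordinate hcard (e k) hort
    exact Module.End.mem_eigenspace_iff.mp ((Submodule.mem_iInf _).mp this i)
  let U : Matrix n n ℂ := of fun i k => b0 (e k) i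
  have hU : Uᴴ * U = 1 := by
    ext k l
    have := (orthonormal_iff_ite.mp b0.orthonormal) (e k) (e l)
    rw [Matrix.mul_apply, one_apply]
    rw [PiLp.inner_apply] at this
    simp only [EmbeddingLike.apply_eq_iff_eq] at this
    rw [← this]
    refine Finset.sum_congr rfl fun i _ => ?_
    simp [U, conjTranspose_apply, mul_comm]
  have hUr : U * Uᴴ = 1 := mul_eq_one_comm.mp hU
  have hTU : ∀ i, T i * U = U * diagonal (fun k => g k i) := by
    intro i
    ext a k
    have := congrArg (fun v : EuclideanSpace ℂ n => v a) (hsub k i)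
    simp only [L, toLpLin_apply, PiLp.smul_apply, smul_eq_mul] at this
    rw [mul_diagonal, Matrix.mul_apply]
    simp only [U, of_apply]
    rw [mul_comm, ← this]
    rfl
  have hdiag : ∀ i, diagonal (fun k => g k i) = Uᴴ * T i * U := fun i => by
    rw [Matrix.mul_assoc, hTU, ← Matrix.mul_assoc, hU, Matrix.one_mul]
  have hreal : ∀ i k, ((g k i).re : ℂ) = g k i := by
    intro i k
    have : (diagonal (fun k => g k i))ᴴ = diagonal (fun k => g k i) := by
      rw [hdiag]; simp only [conjTranspose_mul, conjTranspose_conjTranspose, (hT i).eq,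
        Matrix.mul_assoc]
    rw [diagonal_conjTranspose] at this
    exact Complex.conj_eq_iff_re.mp (congrFun (diagonal_injective this) k)
  refine ⟨U, fun i k => (g k i).re, hU, fun i => ⟨hU, ?_⟩⟩
  simp only [hreal]
  rw [← hTU, Matrix.mul_assoc, hUr, Matrix.mul_one]

variable {C : Type*}

/-- A commuting self-adjoint family together with `r` is diagonalised by one unitary; `κ b` is the
matrix of eigenvalues `c, c' ↦ κ b c c'` attached to the joint eigenvector `b`. -/
lemma CommFam.exists_diag {r : Matrix n n ℂ} (hr : r.IsHermitian) {x : C → C → Matrix n n ℂ}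
    (h : CommFam r x) :
    ∃ U : Matrix n n ℂ, ∃ q : n → ℝ, ∃ κ : n → Matrix C C ℂ, IsDiagBy r U q ∧
      (∀ c c', x c c' = U * diagonal (fun b => κ b c c') * Uᴴ) ∧ ∀ b, (κ b).IsHermitian := by
  let T : Option (Bool × C × C) → Matrix n n ℂ := fun i => match i with
    | none => r
    | some (true, c, c') => x c c' + x c' c
    | some (false, c, c') => Complex.I • (x c c' - x c' c)
  have hT : ∀ i, (T i).IsHermitian := by
    rintro (_ | ⟨_ | _, c, c'⟩)
    · exact hr
    · change (Complex.I • (x c c' - x c' c))ᴴ = _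
      rw [conjTranspose_smul, conjTranspose_sub, h.star, h.star]
      simp only [T, Complex.star_def, Complex.conj_I]
      module
    · change (x c c' + x c' c)ᴴ = _
      rw [conjTranspose_add, h.star, h.star]
      simp [T, add_comm]
  have hC : ∀ i j, T i * T j = T j * T i := by
    have hx : ∀ c c' d d', Commute (x c c') (x d d') := h.comm
    have hxr : ∀ c c', Commute (x c c') r := h.commr
    have aux : ∀ i, ∀ y : Matrix n n ℂ, (∀ c c', Commute (x c c') y) → Commute r y →
        Commute (T i) y := by
      rintro (_ | ⟨_ | _, c, c'⟩) y hy hry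
      · exact hry
      · exact ((hy c c').sub_left (hy c' c)).smul_left _
      · exact (hy c c').add_left (hy c' c)
    intro i j
    refine aux i (T j) (fun c c' => (aux j _ (fun d d' => hx _ _ _ _) (hxr _ _).symm).symm)
      (aux j r hxr (Commute.refl r)).symm
  obtain ⟨U, d, hU, hd⟩ := exists_joint_diag hT hC
  refine ⟨U, d none, fun b => of fun c c' =>
    (1/2 : ℂ) * (d (some (true, c, c')) b - Complex.I * d (some (false, c, c')) b), hd none, ?_, ?_⟩
  · intro c c'
    have h1 := (hd (some (true, c, c'))).eq
    have h2 := (hd (some (false, c, c'))).eq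
    have : x c c' = (1/2 : ℂ) • (T (some (true, c, c')) - Complex.I • T (some (false, c, c'))) := by
      simp only [T, smul_smul, Complex.I_mul_I]
      module
    rw [this, h1, h2]
    have : (diagonal fun b => (of fun c c' => (1/2 : ℂ) * (d (some (true, c, c')) b -
        Complex.I * d (some (false, c, c')) b)) c c' : Matrix n n ℂ) = (1/2 : ℂ) •
        (diagonal (fun b => (d (some (true, c, c')) b : ℂ)) -
          Complex.I • diagonal (fun b => (d (some (false, c, c')) b : ℂ))) := by
      ext i j
      by_cases hij : i = j
      · subst hij; simp
      · simp [hij]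
    rw [this]
    simp only [Matrix.mul_smul, Matrix.smul_mul, Matrix.mul_sub, Matrix.sub_mul]
  · intro b
    have hs : ∀ c c', d (some (true, c', c)) b = d (some (true, c, c')) b := by
      intro c c'
      have h1 := (conj_eq_diag (hd (some (true, c, c'))))
      have h2 := (conj_eq_diag (hd (some (true, c', c))))
      have : T (some (true, c, c')) = T (some (true, c', c)) := by simp [T, add_comm]
      rw [this, h2] at h1
      exact_mod_cast congrFun (diagonal_injective h1) b
    have ha : ∀ c c', d (some (false, c', c)) b = - d (some (false, c, c')) b := by
      intro c c'
      have h1 := (conj_eq_diag (hd (some (false, c, c'))))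
      have h2 := (conj_eq_diag (hd (some (false, c', c))))
      have : T (some (false, c, c')) = -T (some (false, c', c)) := by
        simp [T, ← smul_neg]
      rw [this, Matrix.mul_neg, Matrix.neg_mul, h2] at h1
      have := congrFun (congrFun h1 b) b
      simp only [Matrix.neg_apply, diagonal_apply_eq] at this
      have : -d (some (false, c', c)) b = d (some (false, c, c')) b := by exact_mod_cast this
      linarith
    ext c c'
    simp only [conjTranspose_apply, of_apply, hs c c', ha c c', Complex.star_def, map_mul, map_sub,
      Complex.conj_I, Complex.conj_ofReal]
    push_cast
    have h2 : (starRingEnd ℂ) (1 / 2 : ℂ) = 1 / 2 := by simp [Complex.conj_ofNat]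
    rw [h2]
    ring

end JointDiag
end QEnt

/-! ### Entropy of block-diagonal operators -/

namespace QEnt
open Matrix
open scoped Kronecker

section Blocks
set_option linter.unusedSectionVars false

variable {n J : Type*} [Fintype n] [DecidableEq n] [Fintype J] [DecidableEq J]

lemma vNEntropy_conj {M U : Matrix n n ℂ} (hM : M.IsHermitian) (hU : Uᴴ * U = 1) :
    vNEntropy (U * M * Uᴴ) = vNEntropy M := by
  have h1 := isDiagBy_eigen hM
  obtain ⟨V, d, h⟩ : ∃ V d, IsDiagBy M V d := ⟨_, _, h1⟩
  have h2 : IsDiagBy (U * M * Uᴴ) (U * V) d := by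
    refine ⟨?_, ?_⟩
    · rw [conjTranspose_mul, Matrix.mul_assoc, ← Matrix.mul_assoc Uᴴ, hU, Matrix.one_mul, h.left]
    · rw [h.eq, conjTranspose_mul]; simp only [Matrix.mul_assoc]
  have hl : Real.log 2 ≠ 0 := (Real.log_pos (by norm_num)).ne'
  exact mul_right_cancel₀ hl (h2.vNEntropy_eq.trans h.vNEntropy_eq.symm)

lemma negmul_log_mul (a b : ℝ) :
    a * b * Real.log (a * b) = a * Real.log a * b + a * (b * Real.log b) := by
  by_cases ha : a = 0
  · simp [ha]
  by_cases hb : b = 0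
  · simp [hb]
  rw [Real.log_mul ha hb]; ring

lemma vNEntropy_diagonal (q : J → ℝ) :
    vNEntropy (diagonal (fun j => (q j : ℂ))) * Real.log 2 = -∑ j, q j * Real.log (q j) :=
  IsDiagBy.vNEntropy_eq (U := 1) ⟨by simp, by simp⟩

/-- Entropy of a classical mixture: Shannon entropy of the weights plus mean block entropy. -/
lemma vNEntropy_blockDiagonal (q : J → ℝ) (N : J → Matrix n n ℂ) (hN : ∀ j, (N j).IsHermitian)
    (htr : ∀ j, q j ≠ 0 → (N j).trace = 1) :
    vNEntropy (blockDiagonal fun j => (q j : ℂ) • N j) =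
      vNEntropy (diagonal (fun j => (q j : ℂ))) + ∑ j, q j * vNEntropy (N j) := by
  have hex : ∀ j, ∃ V d, IsDiagBy (N j) V d := fun j => ⟨_, _, isDiagBy_eigen (hN j)⟩
  choose V d h using hex
  have hD : IsDiagBy (blockDiagonal fun j => (q j : ℂ) • N j) (blockDiagonal V)
      (fun p : n × J => q p.2 * d p.2 p.1) := by
    refine ⟨?_, ?_⟩
    · rw [blockDiagonal_conjTranspose, ← blockDiagonal_mul, ← blockDiagonal_one]
      congr 1; ext1 j; exact (h j).left
    · have : (diagonal fun p : n × J => ((q p.2 * d p.2 p.1 : ℝ) : ℂ)) =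
          blockDiagonal (fun j => diagonal fun i => ((q j * d j i : ℝ) : ℂ)) := by
        rw [blockDiagonal_diagonal]
      rw [this, blockDiagonal_conjTranspose, ← blockDiagonal_mul, ← blockDiagonal_mul]
      congr 1; ext1 j
      nth_rw 1 [(h j).eq]
      rw [← Matrix.smul_mul, ← Matrix.mul_smul]
      congr 2
      ext a b
      by_cases hab : a = b
      · subst hab; simp
      · simp [hab]
  have hl : Real.log 2 ≠ 0 := (Real.log_pos (by norm_num)).ne'
  refine mul_right_cancel₀ hl ?_
  rw [hD.vNEntropy_eq, add_mul, vNEntropy_diagonal, Finset.sum_mul, Fintype.sum_prod_type_right,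
    ← Finset.sum_neg_distrib, ← Finset.sum_neg_distrib, ← Finset.sum_add_distrib]
  refine Finset.sum_congr rfl fun j _ => ?_
  rw [mul_assoc, (h j).vNEntropy_eq]
  change -∑ i, q j * d j i * Real.log (q j * d j i) = _
  simp only [negmul_log_mul]
  rw [Finset.sum_add_distrib, ← Finset.mul_sum, ← Finset.mul_sum]
  by_cases hq : q j = 0
  · simp [hq]
  have : ∑ i, d j i = 1 := by
    have h1 := (h j).trace_eq
    rw [htr j hq] at h1
    exact_mod_cast h1.symm
  rw [this]; ring

lemma blockDiagonal_posSemidef {X : J → Matrix n n ℂ} (hX : ∀ j, (X j).PosSemidef) :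
    (blockDiagonal X).PosSemidef := by
  choose B hB using fun j => exists_factor (hX j)
  have : blockDiagonal X = (blockDiagonal B)ᴴ * blockDiagonal B := by
    rw [blockDiagonal_conjTranspose, ← blockDiagonal_mul]
    congr 1; ext1 j; exact hB j
  rw [this]
  exact posSemidef_conjTranspose_mul_self _

/-- Mutually orthogonal positive operators: their sum and their direct sum have equal entropy. -/
lemma vNEntropy_sum_orthogonal {X : J → Matrix n n ℂ} (hX : ∀ j, (X j).PosSemidef)
    (ho : ∀ j k, j ≠ k → X j * X k = 0) :
    vNEntropy (blockDiagonal X) = vNEntropy (∑ j, X j) := by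
  choose B hB using fun j => exists_factor (hX j)
  have hBo : ∀ j k, j ≠ k → B j * (B k)ᴴ = 0 := by
    intro j k hjk
    have h1 := ho j k hjk
    rw [hB j, hB k, Matrix.mul_assoc, ← Matrix.mul_assoc (B j)] at h1
    have h2 : (B j)ᴴ * B j * ((B k)ᴴ * B k) = 0 := by
      rw [← h1]; simp only [Matrix.mul_assoc]
    rw [conjTranspose_mul_self_mul_eq_zero, ← Matrix.mul_assoc] at h2
    have h3 := congrArg conjTranspose h2
    simp only [conjTranspose_mul, conjTranspose_conjTranspose, conjTranspose_zero] at h3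
    rw [← Matrix.mul_assoc] at h3
    have h4 := (conjTranspose_mul_self_mul_eq_zero (B k) (B j)ᴴ).mp h3
    have h5 := congrArg conjTranspose h4
    simpa using h5
  let M : Matrix (n × J) n ℂ := of fun p i => B p.2 p.1 i
  have h1 : Mᴴ * M = ∑ j, X j := by
    ext a b
    rw [Matrix.mul_apply, Fintype.sum_prod_type_right, Matrix.sum_apply]
    refine Finset.sum_congr rfl fun j _ => ?_
    rw [hB j, Matrix.mul_apply]
    rfl
  have h2 : M * Mᴴ = blockDiagonal B * (blockDiagonal B)ᴴ := by
    rw [blockDiagonal_conjTranspose, ← blockDiagonal_mul]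
    ext ⟨a, j⟩ ⟨b, k⟩
    rw [blockDiagonal_apply]
    change _ = if j = k then (B j * (B j)ᴴ) a b else 0
    have : (M * Mᴴ) (a, j) (b, k) = (B j * (B k)ᴴ) a b := by
      rw [Matrix.mul_apply, Matrix.mul_apply]; rfl
    rw [this]
    split_ifs with hjk
    · rw [hjk]
    · rw [hBo j k hjk]; rfl
  have h3 : blockDiagonal X = (blockDiagonal B)ᴴ * blockDiagonal B := by
    rw [blockDiagonal_conjTranspose, ← blockDiagonal_mul]
    congr 1; ext1 j; exact hB j
  rw [h3, ← vNEntropy_mul_conjTranspose, ← h2, vNEntropy_mul_conjTranspose, h1]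

end Blocks
end QEnt

/-! ### The common classical register of `A` and `B` -/

namespace QEnt
open Matrix
open scoped Kronecker

section Sectors
set_option linter.unusedSectionVars false

variable {A B C : Type*} [Fintype A] [DecidableEq A] [Fintype B] [DecidableEq B]
  [Fintype C] [DecidableEq C]

lemma comp_ptr (ρ : Matrix (A × B × C) (A × B × C) ℂ) (c c' : C) :
    comp (ptr ρ) c c' = ptr (blk ρ c c') := rfl

lemma comp_inj {K L : Matrix (B × C) (B × C) ℂ} (h : ∀ c c', comp K c c' = comp L c c') :
    K = L := by
  ext ⟨b, c⟩ ⟨b', c'⟩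
  exact congrFun (congrFun (h c c') b) b'

lemma conj_diag_mul {n : Type*} [Fintype n] [DecidableEq n] {U : Matrix n n ℂ} (hU : Uᴴ * U = 1)
    (d d' : n → ℂ) :
    (U * diagonal d * Uᴴ) * (U * diagonal d' * Uᴴ) = U * diagonal (fun i => d i * d' i) * Uᴴ := by
  rw [← diagonal_mul_diagonal]
  rw [show (U * diagonal d * Uᴴ) * (U * diagonal d' * Uᴴ) =
    U * diagonal d * (Uᴴ * U) * (diagonal d' * Uᴴ) by simp only [Matrix.mul_assoc], hU]
  simp only [Matrix.mul_assoc, Matrix.mul_one]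

lemma trace_conj_diag {n : Type*} [Fintype n] [DecidableEq n] {U : Matrix n n ℂ} (hU : Uᴴ * U = 1)
    (d : n → ℂ) : (U * diagonal d * Uᴴ).trace = ∑ i, d i := by
  rw [trace_mul_comm, ← Matrix.mul_assoc, hU, Matrix.one_mul, trace_diagonal]

/-- If `h` intertwines two families of diagonalisable operators on the two tensor factors, it also
intertwines all functions `g` of their joint spectra, in particular the spectral projections. -/
lemma intertwine_proj {h : Matrix (A × B) (A × B) ℂ} {V : Matrix A A ℂ} {U : Matrix B B ℂ}
    (hV : Vᴴ * V = 1) (hU : Uᴴ * U = 1) {κ' : A → Matrix C C ℂ} {κ : B → Matrix C C ℂ}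
    (hInt : ∀ c c', ((1 : Matrix A A ℂ) ⊗ₖ (U * diagonal (fun b => κ b c c') * Uᴴ)) * h =
      ((V * diagonal (fun a => κ' a c c') * Vᴴ) ⊗ₖ (1 : Matrix B B ℂ)) * h)
    (g : Matrix C C ℂ → ℂ) :
    ((1 : Matrix A A ℂ) ⊗ₖ (U * diagonal (fun b => g (κ b)) * Uᴴ)) * h =
      ((V * diagonal (fun a => g (κ' a)) * Vᴴ) ⊗ₖ (1 : Matrix B B ℂ)) * h := by
  have hU' : U * Uᴴ = 1 := mul_eq_one_comm.mp hU
  have hV' : V * Vᴴ = 1 := mul_eq_one_comm.mp hV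
  set W : Matrix (A × B) (A × B) ℂ := V ⊗ₖ U with hW
  have hWW : Wᴴ * W = 1 := by
    rw [hW, conjTranspose_kronecker, ← mul_kronecker_mul, hV, hU, one_kronecker_one]
  have hWW' : W * Wᴴ = 1 := mul_eq_one_comm.mp hWW
  have e1 : ∀ d : B → ℂ, (1 : Matrix A A ℂ) ⊗ₖ (U * diagonal d * Uᴴ) =
      W * diagonal (fun p => d p.2) * Wᴴ := by
    intro d
    have : (diagonal (fun p : A × B => d p.2)) = (1 : Matrix A A ℂ) ⊗ₖ diagonal d := by
      rw [← diagonal_one, diagonal_kronecker_diagonal]; simp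
    rw [this, hW, conjTranspose_kronecker, ← mul_kronecker_mul, ← mul_kronecker_mul,
      Matrix.mul_one, hV']
  have e2 : ∀ d : A → ℂ, (V * diagonal d * Vᴴ) ⊗ₖ (1 : Matrix B B ℂ) =
      W * diagonal (fun p => d p.1) * Wᴴ := by
    intro d
    have : (diagonal (fun p : A × B => d p.1)) = diagonal d ⊗ₖ (1 : Matrix B B ℂ) := by
      rw [← diagonal_one, diagonal_kronecker_diagonal]; simp
    rw [this, hW, conjTranspose_kronecker, ← mul_kronecker_mul, ← mul_kronecker_mul,
      Matrix.mul_one, hU']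
  have key : ∀ (p j) , (Wᴴ * h) p j ≠ 0 → κ p.2 = κ' p.1 := by
    intro p j hp
    ext c c'
    have := congrArg (fun M => Wᴴ * M) (hInt c c')
    simp only [e1, e2] at this
    simp only [← Matrix.mul_assoc, hWW, Matrix.one_mul] at this
    simp only [Matrix.mul_assoc] at this
    have := congrFun (congrFun this p) j
    rw [diagonal_mul, diagonal_mul] at this
    exact mul_right_cancel₀ hp this
  rw [e1, e2]
  simp only [Matrix.mul_assoc]
  congr 1
  ext p j
  rw [diagonal_mul, diagonal_mul]
  by_cases hp : (Wᴴ * h) p j = 0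
  · rw [hp]; simp
  · rw [key p j hp]

/-- The common classical register of a state with `I(A;C|B) = I(B;C|A) = 0`: matching projective
measurements on `A` and on `B` whose outcome carries all correlations between `AB` and `C`. -/
theorem exists_sectors {ρ : Matrix (A × B × C) (A × B × C) ℂ} (hρ : ρ.PosSemidef)
    (h1 : vNEntropy (trE eXY ρ) + vNEntropy (ptr ρ) - vNEntropy ρ - vNEntropy (ptr (trE eXY ρ)) = 0)
    (h2 : vNEntropy (trE eXY (swp ρ)) + vNEntropy (ptr (swp ρ)) - vNEntropy (swp ρ)
      - vNEntropy (ptr (trE eXY (swp ρ))) = 0) :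
    ∃ (PA : B → Matrix A A ℂ) (PB : B → Matrix B B ℂ),
      (∀ k, (PA k)ᴴ = PA k) ∧ (∀ k, PA k * PA k = PA k) ∧
      (∀ k, (PB k)ᴴ = PB k) ∧ (∀ k, PB k * PB k = PB k) ∧
      (∀ k l, k ≠ l → PB k * PB l = 0) ∧ ∑ k, PB k = 1 ∧
      (∀ k, ((1 : Matrix A A ℂ) ⊗ₖ PB k) * trE eXY ρ = (PA k ⊗ₖ (1 : Matrix B B ℂ)) * trE eXY ρ) ∧
      vNEntropy (blockDiagonal fun k => ptr (ext (Equiv.refl _) (PB k) * ptr ρ)) -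
        vNEntropy (ptr (blockDiagonal fun k => ptr (ext (Equiv.refl _) (PB k) * ptr ρ))) =
        vNEntropy (ptr ρ) - vNEntropy (ptr (trE eXY ρ)) := by
  classical
  obtain ⟨x, x', hx, hx', hblk, hInt⟩ := struct_ABC hρ h1 h2
  have hh := trE_posSemidef eXY hρ
  obtain ⟨U, q, κ, hr, hxκ, hκ⟩ := hx.exists_diag (ptr_posSemidef hh).1
  obtain ⟨V, q', κ', hr', hxκ', -⟩ := hx'.exists_diag (trE_posSemidef (Equiv.refl _) hh).1
  have hU := hr.left
  have hUr := hr.right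
  have hV := hr'.left
  simp only [hxκ, hxκ'] at hInt
  -- a representative for each value of `κ`
  obtain ⟨f, hf, hfκ⟩ : ∃ f : B → B, (∀ b, κ (f b) = κ b) ∧ ∀ b b', κ b = κ b' → f b = f b' :=
    ⟨fun b => Set.rangeSplitting κ (Set.rangeFactorization κ b),
      fun b => Set.apply_rangeSplitting κ _,
      fun b b' hb => by
        have : Set.rangeFactorization κ b = Set.rangeFactorization κ b' := Subtype.ext hb
        simp only [this]⟩
  have hff : ∀ b k, f b = k ↔ (f k = k ∧ κ b = κ k) := by
    intro b k
    constructor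
    · rintro rfl; exact ⟨hfκ _ _ (hf b), (hf b).symm⟩
    · rintro ⟨h3, h4⟩; rw [hfκ _ _ h4, h3]
  let g : B → Matrix C C ℂ → ℂ := fun k m => if f k = k ∧ m = κ k then 1 else 0
  let PB : B → Matrix B B ℂ := fun k => U * diagonal (fun b => g k (κ b)) * Uᴴ
  let PA : B → Matrix A A ℂ := fun k => V * diagonal (fun a => g k (κ' a)) * Vᴴ
  have hg : ∀ k b, g k (κ b) = if f b = k then 1 else 0 := fun k b => by
    simp only [g, hff b k]
  have hgs : ∀ k m, star (g k m) = g k m := fun k m => by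
    simp only [g]; split_ifs <;> simp
  have hgg : ∀ k m, g k m * g k m = g k m := fun k m => by
    simp only [g]; split_ifs <;> simp
  have hcomp : ∀ c c', comp (ptr ρ) c c' = U * diagonal (fun b => (q b : ℂ) * κ b c c') * Uᴴ := by
    intro c c'
    rw [comp_ptr, ← hblk, ptr_mul_kron, hxκ, ← conj_diag_mul hU, ← hr.eq]
  have htr : ∀ b, q b ≠ 0 → (κ b).trace = 1 := by
    intro b hb
    have : ∑ c, comp (ptr ρ) c c = ptr (trE eXY ρ) := by
      rw [← trE_ptr]
      ext i j
      rw [Matrix.sum_apply]; rfl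
    rw [hr.eq] at this
    simp only [hcomp] at this
    rw [← Finset.sum_mul, ← Finset.mul_sum] at this
    have h3 := congrArg (fun M => Uᴴ * M * U) this
    simp only [Matrix.mul_assoc, hU, Matrix.mul_one] at h3
    simp only [← Matrix.mul_assoc, hU, Matrix.one_mul] at h3
    have h4 := congrFun (congrFun h3 b) b
    rw [Matrix.sum_apply] at h4
    simp only [diagonal_apply_eq] at h4
    rw [← Finset.mul_sum] at h4
    have hb' : (q b : ℂ) ≠ 0 := by exact_mod_cast hb
    exact mul_left_cancel₀ hb' (h4.trans (mul_one _).symm)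
  have hBC : vNEntropy (ptr ρ) = vNEntropy (ptr (trE eXY ρ)) + ∑ b, q b * vNEntropy (κ b) := by
    have e1 : ptr ρ = ext (Equiv.refl _) U * ((blockDiagonal fun b => (q b : ℂ) • κ b).submatrix
        (Equiv.prodComm B C) (Equiv.prodComm B C)) * (ext (Equiv.refl _) U)ᴴ := by
      refine comp_inj fun c c' => ?_
      rw [ext_conjTranspose, comp_mul_ext, comp_ext_mul, hcomp]
      congr 2
    have hNH : (blockDiagonal fun b => (q b : ℂ) • κ b).IsHermitian := by
      change (blockDiagonal _)ᴴ = _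
      rw [blockDiagonal_conjTranspose]
      congr 1; ext1 b
      rw [conjTranspose_smul, (hκ b).eq]; simp
    have hext : (ext (Equiv.refl (B × C)) U)ᴴ * ext (Equiv.refl (B × C)) U = 1 := by
      rw [ext_conjTranspose, ← ext_mul, hU, ext_one]
    have hq : vNEntropy (ptr (trE eXY ρ)) = vNEntropy (diagonal fun b => (q b : ℂ)) := by
      rw [hr.eq]
      exact vNEntropy_conj (isHermitian_diagonal_of_self_adjoint _ (by ext; simp)) hU
    rw [e1, vNEntropy_conj (hNH.submatrix _) hext, vNEntropy_submatrix hNH,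
      vNEntropy_blockDiagonal q κ hκ htr, hq]
  let p : B → ℝ := fun k => ∑ b, if f b = k then q b else 0
  have hY : ∀ k, ptr (ext (Equiv.refl _) (PB k) * ptr ρ) = (p k : ℂ) • κ k := by
    intro k
    ext c c'
    have : ptr (ext (Equiv.refl _) (PB k) * ptr ρ) c c' =
        (comp (ext (Equiv.refl _) (PB k) * ptr ρ) c c').trace := rfl
    rw [this, comp_ext_mul, hcomp, conj_diag_mul hU, trace_conj_diag hU, Matrix.smul_apply]
    simp only [hg, p]
    push_cast
    rw [smul_eq_mul, Finset.sum_mul]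
    refine Finset.sum_congr rfl fun b _ => ?_
    split_ifs with hb
    · rw [((hff b k).mp hb).2]; ring
    · simp
  have hpk : ∀ k, p k ≠ 0 → (κ k).trace = 1 := by
    intro k hk
    obtain ⟨b, -, hb⟩ := Finset.exists_ne_zero_of_sum_ne_zero hk
    by_cases hbk : f b = k
    · rw [if_pos hbk] at hb
      rw [← ((hff b k).mp hbk).2]
      exact htr b hb
    · rw [if_neg hbk] at hb
      exact absurd rfl hb
  refine ⟨PA, PB, ?_, ?_, ?_, ?_, ?_, ?_, ?_, ?_⟩
  · intro k
    simp only [PA, conjTranspose_mul, conjTranspose_conjTranspose, diagonal_conjTranspose,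
      Matrix.mul_assoc]
    congr 3
    ext a; exact hgs k _
  · intro k
    simp only [PA, conj_diag_mul hV, hgg]
  · intro k
    simp only [PB, conjTranspose_mul, conjTranspose_conjTranspose, diagonal_conjTranspose,
      Matrix.mul_assoc]
    congr 3
    ext a; exact hgs k _
  · intro k
    simp only [PB, conj_diag_mul hU, hgg]
  · intro k l hkl
    simp only [PB, conj_diag_mul hU]
    have : (fun b => g k (κ b) * g l (κ b)) = 0 := by
      ext b
      simp only [hg, Pi.zero_apply]
      split_ifs with h3 h4
      · exact absurd (h3.symm.trans h4) hkl
      all_goals simp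
    rw [this]; simp
  · simp only [PB]
    rw [← Finset.sum_mul, ← Finset.mul_sum]
    have : ∑ k, diagonal (fun b => g k (κ b)) = (1 : Matrix B B ℂ) := by
      ext b b'
      rw [Matrix.sum_apply]
      by_cases hb : b = b'
      · subst hb; simp [hg]
      · simp [hb]
    rw [this, Matrix.mul_one, hUr]
  · intro k
    exact intertwine_proj hV hU hInt (g k)
  · simp only [hY]
    have h3 : ptr (blockDiagonal fun k => (p k : ℂ) • κ k) = diagonal fun k => (p k : ℂ) := by
      ext k l
      simp only [ptr, of_apply, blockDiagonal_apply, diagonal_apply]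
      split_ifs with hkl
      · by_cases hk : p k = 0
        · simp [hk]
        · have := hpk k hk
          rw [trace] at this
          simp only [Matrix.smul_apply, smul_eq_mul, ← Finset.mul_sum]
          simp only [diag_apply] at this
          rw [this, mul_one]
      · simp
    rw [h3, vNEntropy_blockDiagonal p κ hκ hpk, hBC]
    have : ∑ k, p k * vNEntropy (κ k) = ∑ b, q b * vNEntropy (κ b) := by
      simp only [p, Finset.sum_mul]
      rw [Finset.sum_comm]
      refine Finset.sum_congr rfl fun b _ => ?_
      simp only [ite_mul, zero_mul]
      rw [Finset.sum_ite_eq]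
      simp [hf]
    rw [this]; ring

end Sectors
end QEnt

/-! ### Orthogonality of the conditional states of `E` -/

namespace QEnt
open Matrix
open scoped Kronecker

section Orth
set_option linter.unusedSectionVars false

variable {A B C E : Type*} [Fintype A] [DecidableEq A] [Fintype B] [DecidableEq B]
  [Fintype C] [DecidableEq C] [Fintype E] [DecidableEq E]

lemma ptr_proj {P : Matrix A A ℂ} (hP : P * P = P) (M : Matrix (A × E) (A × E) ℂ) :
    ptr ((P ⊗ₖ (1 : Matrix E E ℂ)) * M * (P ⊗ₖ (1 : Matrix E E ℂ))) =
      ptr ((P ⊗ₖ (1 : Matrix E E ℂ)) * M) := by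
  have cyc : ∀ N : Matrix (A × E) (A × E) ℂ, ptr (N * (P ⊗ₖ (1 : Matrix E E ℂ))) =
      ptr ((P ⊗ₖ (1 : Matrix E E ℂ)) * N) := by
    intro N
    ext e e'
    simp only [ptr, of_apply, Matrix.mul_apply, kroneckerMap_apply, Fintype.sum_prod_type, one_apply,
      mul_ite, mul_one, mul_zero, ite_mul, zero_mul, Finset.sum_ite_eq, Finset.sum_ite_eq',
      Finset.mem_univ, if_true]
    rw [Finset.sum_comm]
    exact Finset.sum_congr rfl fun a _ => Finset.sum_congr rfl fun a' _ => mul_comm _ _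
  rw [cyc, ← Matrix.mul_assoc, ← mul_kronecker_mul, hP, Matrix.one_mul]

lemma ptr_proj_posSemidef {P : Matrix A A ℂ} (hP : P * P = P) (hPH : Pᴴ = P)
    {M : Matrix (A × E) (A × E) ℂ} (hM : M.PosSemidef) :
    (ptr ((P ⊗ₖ (1 : Matrix E E ℂ)) * M)).PosSemidef := by
  rw [← ptr_proj hP]
  refine ptr_posSemidef ?_
  have := hM.mul_mul_conjTranspose_same (P ⊗ₖ (1 : Matrix E E ℂ))
  rwa [conjTranspose_kronecker, hPH, conjTranspose_one] at this

/-- Replacing a positive `s` by an operator `ρ` with `s ρ = ρ` preserves annihilation of the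
`P`-part of the marginal on `E`. -/
lemma annihilate_of_supp {P : Matrix A A ℂ} (hP : P * P = P) (hPH : Pᴴ = P)
    {s ρ : Matrix (A × E) (A × E) ℂ} (hs : s.PosSemidef) (hsρ : s * ρ = ρ) {y : Matrix E E ℂ}
    (hy : y * ptr ((P ⊗ₖ (1 : Matrix E E ℂ)) * s) = 0) :
    y * ptr ((P ⊗ₖ (1 : Matrix E E ℂ)) * ρ) = 0 := by
  have hM : (P ⊗ₖ y) = ((1 : Matrix A A ℂ) ⊗ₖ y) * (P ⊗ₖ (1 : Matrix E E ℂ)) := by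
    rw [← mul_kronecker_mul, Matrix.one_mul, Matrix.mul_one]
  have hM' : (P ⊗ₖ y)ᴴ = (P ⊗ₖ (1 : Matrix E E ℂ)) * ((1 : Matrix A A ℂ) ⊗ₖ yᴴ) := by
    rw [← mul_kronecker_mul, Matrix.one_mul, Matrix.mul_one, conjTranspose_kronecker, hPH]
  have h0 : ((P ⊗ₖ y) * s * (P ⊗ₖ y)ᴴ).trace = 0 := by
    rw [← trace_ptr, hM', hM]
    rw [show ((1 : Matrix A A ℂ) ⊗ₖ y) * (P ⊗ₖ (1 : Matrix E E ℂ)) * s *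
      ((P ⊗ₖ (1 : Matrix E E ℂ)) * ((1 : Matrix A A ℂ) ⊗ₖ yᴴ)) = ((1 : Matrix A A ℂ) ⊗ₖ y) *
      ((P ⊗ₖ (1 : Matrix E E ℂ)) * s * (P ⊗ₖ (1 : Matrix E E ℂ))) * ((1 : Matrix A A ℂ) ⊗ₖ yᴴ) by
        simp only [Matrix.mul_assoc]]
    rw [ptr_mul_kron, ptr_kron_mul, ptr_proj hP, hy, Matrix.zero_mul, trace_zero]
  have h1 := mul_eq_zero_of_trace hs _ h0
  have h2 : (P ⊗ₖ y) * ρ = 0 := by rw [← hsρ, ← Matrix.mul_assoc, h1, Matrix.zero_mul]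
  rw [← ptr_kron_mul, ← Matrix.mul_assoc, ← hM, h2]
  ext; simp [ptr]

lemma ext_zero {n m Z : Type*} [Fintype n] [DecidableEq n] [Fintype m] [DecidableEq m]
    [Fintype Z] [DecidableEq Z] (e : n ≃ m × Z) :
    ext e (0 : Matrix m m ℂ) = 0 := by
  ext i j
  rw [ext_apply]
  split_ifs <;> rfl

/-- An operator annihilating a marginal also annihilates the full positive operator. -/
lemma ext_mul_eq_zero {n m Z : Type*} [Fintype n] [DecidableEq n] [Fintype m] [DecidableEq m]
    [Fintype Z] [DecidableEq Z] (e : n ≃ m × Z) {ρ : Matrix n n ℂ} (hρ : ρ.PosSemidef)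
    {M : Matrix m m ℂ} (h : M * trE e ρ = 0) : ext e M * ρ = 0 := by
  rw [← mul_ext_supp e hρ, ← Matrix.mul_assoc, ← ext_mul,
    ← self_mul_pinv (trE_posSemidef e hρ).1, ← Matrix.mul_assoc, h, Matrix.zero_mul, ext_zero, Matrix.zero_mul]

/-- Positive operators with orthogonal marginals are orthogonal. -/
lemma mul_eq_zero_of_ptr {X Y : Matrix (C × E) (C × E) ℂ} (hX : X.PosSemidef) (hY : Y.PosSemidef)
    (h : ptr X * ptr Y = 0) : X * Y = 0 := by
  have t : ∀ M : Matrix (C × E) (C × E) ℂ, trE (Equiv.prodComm C E) M = ptr M := fun M => rfl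
  have hx := (ptr_posSemidef hX).1
  have hy := (ptr_posSemidef hY).1
  have h0 : supp (ptr X) * supp (ptr Y) = 0 := by
    rw [← pinv_mul_self hx, ← self_mul_pinv hy, Matrix.mul_assoc, ← Matrix.mul_assoc (ptr X), h]
    simp
  have h1 := ext_supp_mul (Equiv.prodComm C E) hX
  have h2 := mul_ext_supp (Equiv.prodComm C E) hY
  rw [t] at h1 h2
  rw [← h1, ← h2, Matrix.mul_assoc, ← Matrix.mul_assoc (ext _ _), ← ext_mul, h0, ext_zero,
    Matrix.zero_mul, Matrix.mul_zero]

/-- Regrouping `A × E × B` as `(A × B) × E`. -/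
def eAB : A × E × B ≃ (A × B) × E where
  toFun p := ((p.1, p.2.2), p.2.1)
  invFun p := (p.1.1, p.2, p.1.2)
  left_inv _ := rfl
  right_inv _ := rfl

lemma ext_eAB_kron (P : Matrix A A ℂ) (Q : Matrix B B ℂ) :
    ext (eAB (E := E)) (P ⊗ₖ Q) = ext eXY (P ⊗ₖ (1 : Matrix E E ℂ)) *
      ((1 : Matrix A A ℂ) ⊗ₖ ((1 : Matrix E E ℂ) ⊗ₖ Q)) := by
  ext ⟨a, e, b⟩ ⟨a', e', b'⟩
  simp only [Matrix.mul_apply, ext_apply, kroneckerMap_apply, Fintype.sum_prod_type, one_apply, eAB,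
    Equiv.prodAssoc_symm_apply, Equiv.coe_fn_mk]
  simp

lemma ext_eXY_comm (F : Matrix (A × E) (A × E) ℂ) (Q : Matrix B B ℂ) :
    ((1 : Matrix A A ℂ) ⊗ₖ ((1 : Matrix E E ℂ) ⊗ₖ Q)) * ext eXY F =
      ext eXY F * ((1 : Matrix A A ℂ) ⊗ₖ ((1 : Matrix E E ℂ) ⊗ₖ Q)) := by
  ext ⟨a, e, b⟩ ⟨a', e', b'⟩
  simp only [Matrix.mul_apply, ext_apply, kroneckerMap_apply, Fintype.sum_prod_type, one_apply,
    Equiv.prodAssoc_symm_apply]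
  simp [mul_comm]

lemma trE_one_kron (G : Matrix (E × B) (E × B) ℂ) :
    trE eXY ((1 : Matrix A A ℂ) ⊗ₖ G) = (1 : Matrix A A ℂ) ⊗ₖ trE (Equiv.refl _) G := by
  ext ⟨a, e⟩ ⟨a', e'⟩
  simp [trE, kroneckerMap_apply, one_apply]

lemma ptr_trE_mul (F : Matrix (A × E) (A × E) ℂ) (G : Matrix (E × B) (E × B) ℂ) :
    ptr (trE eXY (ext eXY F * ((1 : Matrix A A ℂ) ⊗ₖ G))) = ptr F * trE (Equiv.refl _) G := by
  rw [trE_ext_mul, trE_one_kron, ptr_mul_kron]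

lemma trE_one_kron_mul (Q : Matrix B B ℂ) (G : Matrix (E × B) (E × B) ℂ) :
    trE (Equiv.refl _) (((1 : Matrix E E ℂ) ⊗ₖ Q) * G) = ptr ((Q ⊗ₖ (1 : Matrix E E ℂ)) *
      G.submatrix (Equiv.prodComm B E) (Equiv.prodComm B E)) := by
  rw [← ptr_swap, kron_swap, ← submatrix_mul_equiv _ _ _ (Equiv.prodComm B E)]
  rfl

/-- If `I(A;B|E) = 0` and the measurements `PA`, `PB` on `A` and on `B` always agree, then the
unnormalised states of `E` conditioned on different outcomes are orthogonal. -/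
theorem orth_E {σ : Matrix (A × E × B) (A × E × B) ℂ} (hσ : σ.PosSemidef)
    (h : vNEntropy (trE eXY σ) + vNEntropy (ptr σ) - vNEntropy σ - vNEntropy (ptr (trE eXY σ)) = 0)
    {J : Type*} {PA : J → Matrix A A ℂ} {PB : J → Matrix B B ℂ}
    (hA : ∀ k, (PA k)ᴴ = PA k) (hA2 : ∀ k, PA k * PA k = PA k)
    (hB : ∀ k, (PB k)ᴴ = PB k) (hB2 : ∀ k, PB k * PB k = PB k)
    (hB0 : ∀ k l, k ≠ l → PB k * PB l = 0)
    (hAB : ∀ k, ((1 : Matrix A A ℂ) ⊗ₖ PB k) * trE eAB σ =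
      (PA k ⊗ₖ (1 : Matrix B B ℂ)) * trE eAB σ) {k l : J} (hkl : k ≠ l) :
    trE (Equiv.refl _) (((1 : Matrix E E ℂ) ⊗ₖ PB k) * ptr σ) *
      trE (Equiv.refl _) (((1 : Matrix E E ℂ) ⊗ₖ PB l) * ptr σ) = 0 := by
  obtain ⟨hs, -, -⟩ := ssa_eq hσ h
  have p2 := trE_posSemidef eXY hσ
  have p3 := ptr_posSemidef hσ
  set sA := supp (trE eXY σ) with hsA
  set sB := supp (ptr σ) with hsB
  have hsBs : (sB.submatrix (Equiv.prodComm B E) (Equiv.prodComm B E)).PosSemidef :=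
    (supp_posSemidef _).submatrix _
  have h0 : (PA k ⊗ₖ PB l) * trE eAB σ = 0 := by
    have e1 : PA k ⊗ₖ PB l = ((1 : Matrix A A ℂ) ⊗ₖ PB l) * (PA k ⊗ₖ (1 : Matrix B B ℂ)) := by
      rw [← mul_kronecker_mul, Matrix.one_mul, Matrix.mul_one]
    rw [e1, Matrix.mul_assoc, ← hAB, ← Matrix.mul_assoc, ← mul_kronecker_mul, hB0 l k hkl.symm]
    simp
  have h1 := ext_mul_eq_zero eAB hσ h0
  have h2 : ext (eAB (E := E)) (PA k ⊗ₖ PB l) * supp σ = 0 := by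
    rw [← self_mul_pinv hσ.1, ← Matrix.mul_assoc, h1, Matrix.zero_mul]
  -- the support identity splits this relation into an `AE` and an `EB` part
  have h3 : ptr ((PA k ⊗ₖ (1 : Matrix E E ℂ)) * sA) *
      trE (Equiv.refl _) (((1 : Matrix E E ℂ) ⊗ₖ PB l) * sB) = 0 := by
    rw [← ptr_trE_mul, ext_mul]
    have e1 : (1 : Matrix A A ℂ) ⊗ₖ (((1 : Matrix E E ℂ) ⊗ₖ PB l) * sB) =
        ((1 : Matrix A A ℂ) ⊗ₖ ((1 : Matrix E E ℂ) ⊗ₖ PB l)) * ((1 : Matrix A A ℂ) ⊗ₖ sB) := by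
      rw [← mul_kronecker_mul, Matrix.one_mul]
    rw [e1, Matrix.mul_assoc, ← Matrix.mul_assoc (ext eXY sA), ← ext_eXY_comm, Matrix.mul_assoc,
      hs, ← Matrix.mul_assoc, ← ext_eAB_kron, h2]
    ext; simp [ptr, trE]
  rw [trE_one_kron_mul] at h3 ⊢
  have hSl := ptr_proj_posSemidef (hB2 l) (hB l) hsBs
  have hTk := ptr_proj_posSemidef (hA2 k) (hA k) (supp_posSemidef (trE eXY σ))
  have hRk := ptr_proj_posSemidef (hA2 k) (hA k) p2
  have h4 : ptr ((PB l ⊗ₖ (1 : Matrix E E ℂ)) *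
      sB.submatrix (Equiv.prodComm B E) (Equiv.prodComm B E)) *
      ptr ((PA k ⊗ₖ (1 : Matrix E E ℂ)) * sA) = 0 := by
    have := congrArg conjTranspose h3
    rwa [conjTranspose_mul, hSl.1.eq, hTk.1.eq, conjTranspose_zero] at this
  have h5 := annihilate_of_supp (hA2 k) (hA k) (supp_posSemidef (trE eXY σ))
    (supp_mul_self p2.1) h4
  have h6 : ptr ((PA k ⊗ₖ (1 : Matrix E E ℂ)) * trE eXY σ) * ptr ((PB l ⊗ₖ (1 : Matrix E E ℂ)) *
      sB.submatrix (Equiv.prodComm B E) (Equiv.prodComm B E)) = 0 := by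
    have := congrArg conjTranspose h5
    rwa [conjTranspose_mul, hSl.1.eq, hRk.1.eq, conjTranspose_zero] at this
  have h7 := annihilate_of_supp (ρ := (ptr σ).submatrix (Equiv.prodComm B E) (Equiv.prodComm B E))
    (hB2 l) (hB l) hsBs (by rw [submatrix_mul_equiv, supp_mul_self p3.1]) h6
  -- the conditional states of `E` do not depend on which of the two measurements is used
  have h8 : ptr ((PA k ⊗ₖ (1 : Matrix E E ℂ)) * trE eXY σ) =
      trE (Equiv.refl _) (((1 : Matrix E E ℂ) ⊗ₖ PB k) * ptr σ) := by
    have e0 : (((1 : Matrix A A ℂ) ⊗ₖ PB k) - (PA k ⊗ₖ (1 : Matrix B B ℂ))) * trE eAB σ = 0 := by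
      rw [Matrix.sub_mul, hAB, sub_self]
    have e1 := ext_mul_eq_zero eAB hσ e0
    rw [ext_sub, Matrix.sub_mul, sub_eq_zero, ext_eAB_kron, ext_eAB_kron, one_kronecker_one,
      one_kronecker_one, one_kronecker_one, ext_one, Matrix.one_mul, Matrix.mul_one] at e1
    rw [← trE_ext_mul, ← e1, ← trE_ptr, ptr_kron_mul]
  rw [← trE_one_kron_mul, ← h8, trE_one_kron_mul]
  exact h7

end Orth
end QEnt

/-! ### The inequality for the purified system -/

namespace QEnt
open Matrix
open scoped Kronecker

section Core
set_option linter.unusedSectionVars false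

variable {A B C E : Type*} [Fintype A] [DecidableEq A] [Fintype B] [DecidableEq B]
  [Fintype C] [DecidableEq C] [Fintype E] [DecidableEq E]

/-- Regrouping `A × B × C × E` as `(A × B × C) × E`. -/
def eABC : A × B × C × E ≃ (A × B × C) × E where
  toFun p := ((p.1, p.2.1, p.2.2.1), p.2.2.2)
  invFun p := (p.1.1, p.1.2.1, p.1.2.2, p.2)
  left_inv _ := rfl
  right_inv _ := rfl

/-- Regrouping `A × B × C × E` as `(A × E × B) × C`. -/
def eAEB : A × B × C × E ≃ (A × E × B) × C where
  toFun p := ((p.1, p.2.2.2, p.2.1), p.2.2.1)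
  invFun p := (p.1.1, p.1.2.2, p.2, p.1.2.1)
  left_inv _ := rfl
  right_inv _ := rfl

/-- Regrouping `C × B × E` as `(C × E) × B`. -/
def eCE : C × B × E ≃ (C × E) × B where
  toFun p := ((p.1, p.2.2), p.2.1)
  invFun p := (p.1.1, p.2, p.1.2)
  left_inv _ := rfl
  right_inv _ := rfl

/-- Swapping the last two factors of `A × E × B`. -/
def eLast : A × E × B ≃ A × B × E where
  toFun p := (p.1, p.2.2, p.2.1)
  invFun p := (p.1, p.2.2, p.2.1)
  left_inv _ := rfl
  right_inv _ := rfl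

/-- The unnormalised state of `CE` conditioned on the outcome `P` of a measurement on `B`. -/
noncomputable def condCE (τ : Matrix (A × B × C × E) (A × B × C × E) ℂ) (P : Matrix B B ℂ) :
    Matrix (C × E) (C × E) ℂ :=
  ptr ((P ⊗ₖ (1 : Matrix (C × E) (C × E) ℂ)) * ptr τ)

lemma condCE_apply (τ : Matrix (A × B × C × E) (A × B × C × E) ℂ) (P : Matrix B B ℂ)
    (x y : C × E) :
    condCE τ P x y = ∑ b, ∑ b', P b b' * ∑ a, τ (a, b', x) (a, b, y) := by
  simp only [condCE, ptr, of_apply, Matrix.mul_apply, kroneckerMap_apply]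
  refine Finset.sum_congr rfl fun b _ => ?_
  rw [Fintype.sum_prod_type]
  refine Finset.sum_congr rfl fun b' _ => ?_
  simp [one_apply]

lemma ptr_condCE (τ : Matrix (A × B × C × E) (A × B × C × E) ℂ) (P : Matrix B B ℂ) :
    ptr (condCE τ P) =
      trE (Equiv.refl _) (((1 : Matrix E E ℂ) ⊗ₖ P) * ptr (trE eAEB τ)) := by
  ext e e'
  rw [trE_one_kron_mul]
  simp only [ptr, of_apply, condCE_apply, Matrix.mul_apply, kroneckerMap_apply]
  rw [Finset.sum_comm]
  refine Finset.sum_congr rfl fun b _ => ?_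
  rw [Fintype.sum_prod_type, Finset.sum_comm]
  refine Finset.sum_congr rfl fun b' _ => ?_
  rw [← Finset.mul_sum, Finset.sum_comm]
  simp only [one_apply, submatrix_apply, of_apply, trE]
  simp
  exact Or.inl rfl

lemma trE_condCE (τ : Matrix (A × B × C × E) (A × B × C × E) ℂ) (P : Matrix B B ℂ) :
    trE (Equiv.refl _) (condCE τ P) = ptr (ext (Equiv.refl _) P * ptr (trE eABC τ)) := by
  ext c c'
  change ∑ e, condCE τ P (c, e) (c', e) = (comp (ext (Equiv.refl _) P * ptr (trE eABC τ)) c c').trace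
  rw [comp_ext_mul]
  simp only [condCE_apply, trace, diag_apply, Matrix.mul_apply]
  rw [Finset.sum_comm]
  refine Finset.sum_congr rfl fun b _ => ?_
  rw [Finset.sum_comm]
  refine Finset.sum_congr rfl fun b' _ => ?_
  rw [← Finset.mul_sum, Finset.sum_comm]
  rfl

lemma sum_condCE (τ : Matrix (A × B × C × E) (A × B × C × E) ℂ) {PB : B → Matrix B B ℂ}
    (hPB : ∑ k, PB k = 1) : ∑ k, condCE τ (PB k) = ptr (ptr τ) := by
  ext x y
  rw [Matrix.sum_apply]
  simp only [condCE_apply]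
  rw [Finset.sum_comm]
  refine Finset.sum_congr rfl fun b _ => ?_
  rw [Finset.sum_comm]
  simp only [← Finset.sum_mul, ← Matrix.sum_apply, hPB]
  simp [one_apply, ptr]

section Entropies

variable (τ : Matrix (A × B × C × E) (A × B × C × E) ℂ)

lemma SABC_eq : vNEntropy (trE eABC τ) = SABC τ := by
  unfold SABC; congr 1

lemma SAB_eq : vNEntropy (trE eXY (trE eABC τ)) = SAB τ := by
  unfold SAB; congr 1

lemma SBC_eq : vNEntropy (ptr (trE eABC τ)) = SBC τ := by
  unfold SBC; congr 1

lemma SB_eq : vNEntropy (ptr (trE eXY (trE eABC τ))) = SB τ := by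
  unfold SB; congr 1

lemma SAC_eq : vNEntropy (ptr (swp (trE eABC τ))) = SAC τ := by
  unfold SAC; congr 1

lemma SA_eq : vNEntropy (ptr (trE eXY (swp (trE eABC τ)))) = SA τ := by
  unfold SA; congr 1

lemma SAD_eq : vNEntropy (trE eXY (trE eAEB τ)) = SAD τ := by
  unfold SAD; congr 1

lemma SD_eq : vNEntropy (ptr (trE eXY (trE eAEB τ))) = SD τ := by
  unfold SD; congr 1

variable {τ}

lemma SAB_eq_swp (hτ : τ.PosSemidef) : vNEntropy (trE eXY (swp (trE eABC τ))) = SAB τ := by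
  rw [trE_swp, vNEntropy_submatrix (trE_posSemidef eXY (trE_posSemidef eABC hτ)).1, SAB_eq]

lemma SABC_eq_swp (hτ : τ.PosSemidef) : vNEntropy (swp (trE eABC τ)) = SABC τ := by
  rw [← SABC_eq]
  let e : B × A × C ≃ A × B × C :=
    ⟨fun t => (t.2.1, t.1, t.2.2), fun t => (t.2.1, t.1, t.2.2), fun _ => rfl, fun _ => rfl⟩
  exact vNEntropy_submatrix (trE_posSemidef eABC hτ).1 e

lemma SBD_eq (hτ : τ.PosSemidef) : vNEntropy (ptr (trE eAEB τ)) = SBD τ := by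
  rw [← vNEntropy_submatrix (ptr_posSemidef (trE_posSemidef eAEB hτ)).1 (Equiv.prodComm B E)]
  unfold SBD; congr 1

lemma SABD_eq (hτ : τ.PosSemidef) : vNEntropy (trE eAEB τ) = SABD τ := by
  rw [← vNEntropy_submatrix (trE_posSemidef eAEB hτ).1 eLast.symm]
  unfold SABD; congr 1

end Entropies

/-- If `I(A;C|B) = I(B;C|A) = 0` and `I(A;B|E) = 0` then `S(C|E) ≤ S(C|AB)`. -/
theorem core {τ : Matrix (A × B × C × E) (A × B × C × E) ℂ} (hτ : τ.PosSemidef)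
    (h1 : SAB τ + SBC τ - SABC τ - SB τ = 0)
    (h2 : SAB τ + SAC τ - SABC τ - SA τ = 0)
    (h3 : SAD τ + SBD τ - SABD τ - SD τ = 0) :
    SCD τ - SD τ ≤ SABC τ - SAB τ := by
  have hρ := trE_posSemidef eABC hτ
  have hσ := trE_posSemidef eAEB hτ
  have h1' : vNEntropy (trE eXY (trE eABC τ)) + vNEntropy (ptr (trE eABC τ)) -
      vNEntropy (trE eABC τ) - vNEntropy (ptr (trE eXY (trE eABC τ))) = 0 := by
    rw [SAB_eq, SBC_eq, SABC_eq, SB_eq]; exact h1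
  have h2' : vNEntropy (trE eXY (swp (trE eABC τ))) + vNEntropy (ptr (swp (trE eABC τ))) -
      vNEntropy (swp (trE eABC τ)) - vNEntropy (ptr (trE eXY (swp (trE eABC τ)))) = 0 := by
    rw [SAB_eq_swp hτ, SAC_eq, SABC_eq_swp hτ, SA_eq]; exact h2
  have h3' : vNEntropy (trE eXY (trE eAEB τ)) + vNEntropy (ptr (trE eAEB τ)) -
      vNEntropy (trE eAEB τ) - vNEntropy (ptr (trE eXY (trE eAEB τ))) = 0 := by
    rw [SAD_eq, SBD_eq hτ, SABD_eq hτ, SD_eq]; exact h3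
  obtain ⟨PA, PB, hA, hA2, hB, hB2, hB0, hB1, hAB, hS⟩ := exists_sectors hρ h1' h2'
  have hAB' : ∀ k, ((1 : Matrix A A ℂ) ⊗ₖ PB k) * trE eAB (trE eAEB τ) =
      (PA k ⊗ₖ (1 : Matrix B B ℂ)) * trE eAB (trE eAEB τ) := by
    have : trE eAB (trE eAEB τ) = trE eXY (trE eABC τ) := by
      ext p q
      exact Finset.sum_comm
    rw [this]; exact hAB
  have hX : ∀ k, (condCE τ (PB k)).PosSemidef := fun k =>
    ptr_proj_posSemidef (hB2 k) (hB k) (ptr_posSemidef hτ)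
  have hXo' : ∀ k l, k ≠ l → ptr (condCE τ (PB k)) * ptr (condCE τ (PB l)) = 0 := by
    intro k l hkl
    rw [ptr_condCE, ptr_condCE]
    exact orth_E hσ h3' hA hA2 hB hB2 hB0 hAB' hkl
  have hXo : ∀ k l, k ≠ l → condCE τ (PB k) * condCE τ (PB l) = 0 := fun k l hkl =>
    mul_eq_zero_of_ptr (hX k) (hX l) (hXo' k l hkl)
  have hbd := blockDiagonal_posSemidef hX
  set ω : Matrix (C × B × E) (C × B × E) ℂ :=
    (blockDiagonal fun k => condCE τ (PB k)).submatrix eCE eCE with hω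
  have hωp : ω.PosSemidef := hbd.submatrix _
  have key := ssa hωp
  have s1 : vNEntropy ω = SCD τ := by
    rw [hω, vNEntropy_submatrix hbd.1, vNEntropy_sum_orthogonal hX hXo, sum_condCE τ hB1]
    unfold SCD
    congr 1
    ext x y
    exact Finset.sum_comm
  have s2 : vNEntropy (ptr ω) = SD τ := by
    have hp : ∀ k, (ptr (condCE τ (PB k))).PosSemidef := fun k => ptr_posSemidef (hX k)
    have e1 : ptr ω = (blockDiagonal fun k => ptr (condCE τ (PB k))).submatrix
        (Equiv.prodComm B E) (Equiv.prodComm B E) := by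
      ext ⟨k, e⟩ ⟨k', e'⟩
      simp only [ptr, of_apply, hω, submatrix_apply, blockDiagonal_apply, eCE, Equiv.coe_fn_mk,
        Equiv.prodComm_apply, Prod.swap_prod_mk, Finset.sum_ite_irrel, Finset.sum_const_zero]
    rw [e1, vNEntropy_submatrix (blockDiagonal_posSemidef hp).1, vNEntropy_sum_orthogonal hp hXo']
    have e2 : ∑ k, ptr (condCE τ (PB k)) = ptr (∑ k, condCE τ (PB k)) := by
      ext e e'
      simp only [ptr, of_apply, Matrix.sum_apply]
      exact Finset.sum_comm
    rw [e2, sum_condCE τ hB1]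
    unfold SD
    congr 1
    ext e e'
    change ∑ c, ∑ b, ∑ a, τ (a, b, c, e) (a, b, c, e') = ∑ a, ∑ b, ∑ c, τ (a, b, c, e) (a, b, c, e')
    rw [Finset.sum_comm, Finset.sum_congr rfl fun b _ => Finset.sum_comm, Finset.sum_comm]
  have s3 : trE eXY ω =
      blockDiagonal fun k => ptr (ext (Equiv.refl _) (PB k) * ptr (trE eABC τ)) := by
    simp only [← trE_condCE]
    ext ⟨c, k⟩ ⟨c', k'⟩
    simp only [trE, of_apply, hω, submatrix_apply, blockDiagonal_apply, eCE, Equiv.coe_fn_mk,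
      Equiv.symm_symm, Equiv.prodAssoc_apply, Finset.sum_ite_irrel, Finset.sum_const_zero,
      Equiv.refl_symm, Equiv.refl_apply]
  rw [s1, s2, s3] at key
  have hS' : vNEntropy (ptr (trE eABC τ)) - vNEntropy (ptr (trE eXY (trE eABC τ))) =
      SABC τ - SAB τ := by
    rw [SBC_eq, SB_eq]
    linarith
  linarith

end Core
end QEnt

/-! ### Purification -/

namespace QEnt
open Matrix
open scoped Kronecker

section Purify
set_option linter.unusedSectionVars false

/-- The two marginals of a pure state have the same entropy. -/
lemma vNEntropy_dual {x y : Type*} [Fintype x] [DecidableEq x] [Fintype y] [DecidableEq y]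
    (M : x → y → ℂ) :
    vNEntropy (of fun i i' => ∑ j, M i j * star (M i' j)) =
      vNEntropy (of fun j j' => ∑ i, M i j * star (M i j')) := by
  have h1 : (of fun i i' => ∑ j, M i j * star (M i' j)) = (of M) * (of M)ᴴ := by
    ext i i'; rw [Matrix.mul_apply]; rfl
  have h2 : (of fun j j' => ∑ i, M i j * star (M i j')) = ((of M)ᴴ * of M)ᵀ := by
    ext j j'
    rw [transpose_apply, Matrix.mul_apply]
    exact Finset.sum_congr rfl fun i _ => mul_comm _ _
  rw [h1, h2, vNEntropy_transpose (isHermitian_conjTranspose_mul_self _),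
    vNEntropy_mul_conjTranspose]

variable {A B C D N : Type*} [Fintype A] [DecidableEq A] [Fintype B] [DecidableEq B]
  [Fintype C] [DecidableEq C] [Fintype D] [DecidableEq D] [Fintype N] [DecidableEq N]

/-- The `ABCE` marginal of the pure state `ψ` on `ABCDE`. -/
noncomputable def purE (ψ : A × B × C × D → N → ℂ) :
    Matrix (A × B × C × N) (A × B × C × N) ℂ :=
  of fun p q => ∑ d, ψ (p.1, p.2.1, p.2.2.1, d) p.2.2.2 * star (ψ (q.1, q.2.1, q.2.2.1, d) q.2.2.2)

variable (ψ : A × B × C × D → N → ℂ)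

lemma purE_posSemidef : (purE ψ).PosSemidef := by
  have : purE ψ = (of fun (p : A × B × C × N) d => ψ (p.1, p.2.1, p.2.2.1, d) p.2.2.2) *
      (of fun (p : A × B × C × N) d => ψ (p.1, p.2.1, p.2.2.1, d) p.2.2.2)ᴴ := by
    ext p q; rw [Matrix.mul_apply]; rfl
  rw [this]
  exact posSemidef_self_mul_conjTranspose _

variable {ρ : Matrix (A × B × C × D) (A × B × C × D) ℂ}

lemma sum_purE (hψ : ρ = of fun p q => ∑ e, ψ p e * star (ψ q e))
    (a a' : A) (b b' : B) (c c' : C) :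
    ∑ e, purE ψ (a, b, c, e) (a', b', c', e) = ∑ d, ρ (a, b, c, d) (a', b', c', d) := by
  rw [hψ]
  exact Finset.sum_comm

lemma SABC_purE (hψ : ρ = of fun p q => ∑ e, ψ p e * star (ψ q e)) :
    SABC (purE ψ) = SABC ρ := by
  simp only [SABC, sum_purE ψ hψ]
lemma SAB_purE (hψ : ρ = of fun p q => ∑ e, ψ p e * star (ψ q e)) :
    SAB (purE ψ) = SAB ρ := by
  simp only [SAB, sum_purE ψ hψ]
lemma SBC_purE (hψ : ρ = of fun p q => ∑ e, ψ p e * star (ψ q e)) :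
    SBC (purE ψ) = SBC ρ := by
  simp only [SBC, sum_purE ψ hψ]
lemma SAC_purE (hψ : ρ = of fun p q => ∑ e, ψ p e * star (ψ q e)) :
    SAC (purE ψ) = SAC ρ := by
  simp only [SAC, sum_purE ψ hψ]
lemma SA_purE (hψ : ρ = of fun p q => ∑ e, ψ p e * star (ψ q e)) :
    SA (purE ψ) = SA ρ := by
  simp only [SA, sum_purE ψ hψ]
lemma SB_purE (hψ : ρ = of fun p q => ∑ e, ψ p e * star (ψ q e)) :
    SB (purE ψ) = SB ρ := by
  simp only [SB, sum_purE ψ hψ]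

lemma SD_purE (hψ : ρ = of fun p q => ∑ e, ψ p e * star (ψ q e)) :
    SD (purE ψ) = SABCD ρ := by
  unfold SD SABCD
  rw [hψ, vNEntropy_dual]
  simp only [Fintype.sum_prod_type]
  rfl

lemma SAD_purE (hψ : ρ = of fun p q => ∑ e, ψ p e * star (ψ q e)) :
    SAD (purE ψ) = SBCD ρ := by
  have := vNEntropy_dual (fun (i : B × C × D) (j : A × N) => ψ (j.1, i.1, i.2.1, i.2.2) j.2)
  simp only [Fintype.sum_prod_type] at this
  unfold SAD SBCD
  rw [hψ]
  exact this.symm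

lemma SBD_purE (hψ : ρ = of fun p q => ∑ e, ψ p e * star (ψ q e)) :
    SBD (purE ψ) = SACD ρ := by
  have := vNEntropy_dual (fun (i : A × C × D) (j : B × N) => ψ (i.1, j.1, i.2.1, i.2.2) j.2)
  simp only [Fintype.sum_prod_type] at this
  unfold SBD SACD
  rw [hψ]
  exact this.symm

lemma SCD_purE (hψ : ρ = of fun p q => ∑ e, ψ p e * star (ψ q e)) :
    SCD (purE ψ) = SABD ρ := by
  have := vNEntropy_dual (fun (i : A × B × D) (j : C × N) => ψ (i.1, i.2.1, j.1, i.2.2) j.2)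
  simp only [Fintype.sum_prod_type] at this
  unfold SCD SABD
  rw [hψ]
  exact this.symm

lemma SABD_purE (hψ : ρ = of fun p q => ∑ e, ψ p e * star (ψ q e)) :
    SABD (purE ψ) = SCD ρ := by
  have := vNEntropy_dual (fun (i : C × D) (j : A × B × N) => ψ (j.1, j.2.1, i.1, i.2) j.2.2)
  simp only [Fintype.sum_prod_type] at this
  unfold SABD SCD
  rw [hψ]
  exact this.symm

end Purify
end QEnt

/-- **Theorem 1″ (1).** If `I(A;C|B) = 0`, `I(B;C|A) = 0` and `I(A;B|CD) = 0`,
then `S(C|AB) + S(C|ABD) ≥ 0`. -/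
theorem constrained_inequality''_one
    {A B C D : Type*} [Fintype A] [DecidableEq A] [Fintype B] [DecidableEq B]
    [Fintype C] [DecidableEq C] [Fintype D] [DecidableEq D]
    (ρ : Matrix (A × B × C × D) (A × B × C × D) ℂ) (hρ : IsState ρ)
    (h1 : SAB ρ + SBC ρ - SABC ρ - SB ρ = 0)
    (h2 : SAB ρ + SAC ρ - SABC ρ - SA ρ = 0)
    (h3 : SACD ρ + SBCD ρ - SABCD ρ - SCD ρ = 0) :
    0 ≤ (SABC ρ - SAB ρ) + (SABCD ρ - SABD ρ) := by
  obtain ⟨M, hM⟩ := QEnt.exists_factor hρ.1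
  let ψ : A × B × C × D → A × B × C × D → ℂ := fun p e => star (M e p)
  have hψ : ρ = Matrix.of fun p q => ∑ e, ψ p e * star (ψ q e) := by
    ext p q
    rw [hM, Matrix.mul_apply]
    simp [ψ, Matrix.conjTranspose_apply]
  have key := QEnt.core (QEnt.purE_posSemidef ψ)
    (by rw [QEnt.SAB_purE ψ hψ, QEnt.SBC_purE ψ hψ, QEnt.SABC_purE ψ hψ, QEnt.SB_purE ψ hψ]
        exact h1)
    (by rw [QEnt.SAB_purE ψ hψ, QEnt.SAC_purE ψ hψ, QEnt.SABC_purE ψ hψ, QEnt.SA_purE ψ hψ]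
        exact h2)
    (by rw [QEnt.SAD_purE ψ hψ, QEnt.SBD_purE ψ hψ, QEnt.SABD_purE ψ hψ, QEnt.SD_purE ψ hψ]
        linarith)
  rw [QEnt.SCD_purE ψ hψ, QEnt.SD_purE ψ hψ, QEnt.SABC_purE ψ hψ, QEnt.SAB_purE ψ hψ] at key
  linarith
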